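/- arXiv:0812.5002 — 2 statements merged into one kernel-verified Lean document; each statement's English description precedes it below -/
import Mathlib

section
/- Every Lie super-bialgebra structure (L, [·,·], Δ) on the centerless twisted N=2 superconformal algebra L is triangular coboundary; that is, there exists an even element r ∈ Im(1⊗1 − τ) ⊂ L ⊗ L satisfying the classical Yang–Baxter equation c(r) = [r^{12}, r^{13}] + [r^{12}, r^{23}] + [r^{13}, r^{23}] = 0 such that Δ(x) = (−1)^{[r][x]} x ∗ r for all x ∈ L. -/
namespace N2

/-- Basis indices of the centerless twisted N=2 superconformal algebra:
`L m` is the Virasoro generator `L_m` (`m ∈ ℤ`),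
`T k` is the Heisenberg generator `T_{k+1/2}` (`k ∈ ℤ`, index in `1/2 + ℤ`),
`G n` is the fermionic generator `G_{n/2}` (`n ∈ ℤ`, index in `(1/2)ℤ`). -/
inductive Idx : Type
  | L : ℤ → Idx
  | T : ℤ → Idx
  | G : ℤ → Idx
  deriving DecidableEq

noncomputable section

/-- The centerless twisted N=2 superconformal algebra `𝓛`, as the free
complex vector space on the basis `{L_m, T_r, G_p}`. -/
abbrev Lsa : Type := Idx →₀ ℂ

/-- `𝓛 ⊗ 𝓛`, realized as the free complex vector space on pairs of basis indices. -/
abbrev V : Type := (Idx × Idx) →₀ ℂ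

/-- `𝓛 ⊗ 𝓛 ⊗ 𝓛`. -/
abbrev W : Type := (Idx × Idx × Idx) →₀ ℂ

/-- the basis vector indexed by `i`. -/
def e (i : Idx) : Lsa := Finsupp.single i 1

/-- the ℤ₂-parity of the basis elements: `L_m, T_r` are even, `G_p` is odd. -/
def par : Idx → ZMod 2
  | .L _ => 0
  | .T _ => 0
  | .G _ => 1

/-- the sign `(-1)^p` for `p ∈ ℤ₂`. -/
def sgn (p : ZMod 2) : ℂ := if p = 0 then 1 else -1

/-- the `(1/2)ℤ`-degree of a basis element, as a rational number:
`L_m ↦ m`, `T_{k+1/2} ↦ k + 1/2`, `G_{n/2} ↦ n/2`. -/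
def qdeg : Idx → ℚ
  | .L m => (m : ℚ)
  | .T k => (k : ℚ) + 1/2
  | .G n => (n : ℚ) / 2

/-- The super-bracket of `𝓛` on basis elements:
`[L_m, L_n] = (m-n) L_{m+n}`, `[L_m, T_r] = -r T_{r+m}`, `[T_r, T_s] = 0`,
`[L_m, G_p] = (m/2 - p) G_{p+m}`, `[T_r, G_p] = G_{p+r}`,
`[G_p, G_q] = (-1)^{2p} 2 L_{p+q}` if `p+q ∈ ℤ` and
`[G_p, G_q] = (-1)^{2p+1} (p-q) T_{p+q}` if `p+q ∈ 1/2+ℤ`,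
together with the super skew-symmetric counterparts. -/
def bk : Idx → Idx → Lsa
  | .L m, .L n => ((m : ℂ) - n) • e (.L (m + n))
  | .L m, .T k => (-((k : ℂ) + 1/2)) • e (.T (k + m))
  | .L m, .G n => (((m : ℂ) - n) / 2) • e (.G (n + 2*m))
  | .T k, .L m => ((k : ℂ) + 1/2) • e (.T (k + m))
  | .T _, .T _ => 0
  | .T k, .G n => e (.G (n + 2*k + 1))
  | .G n, .L m => (-((m : ℂ) - n) / 2) • e (.G (n + 2*m))
  | .G n, .T k => - e (.G (n + 2*k + 1))
  | .G n, .G n' =>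
      if (n + n') % 2 = 0 then
        ((-1 : ℂ) ^ n * 2) • e (.L ((n + n') / 2))
      else
        ((-1 : ℂ) ^ (n + 1) * (((n : ℂ) - n') / 2)) • e (.T ((n + n' - 1) / 2))

/-- the bracket of `𝓛`, extended bilinearly to all of `𝓛`. -/
def br (x y : Lsa) : Lsa :=
  x.sum fun i a => y.sum fun j b => (a * b) • bk i j

/-- the adjoint diagonal action of `𝓛` on `𝓛 ⊗ 𝓛`:
`x ∗ (a ⊗ b) = [x,a] ⊗ b + (-1)^{[x][a]} a ⊗ [x,b]`. -/
def act2 (x : Lsa) (v : V) : V :=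
  x.sum fun i a => v.sum fun p c =>
    (a * c) •
      (((bk i p.1).sum fun k t => Finsupp.single (k, p.2) t)
        + sgn (par i * par p.1) • ((bk i p.2).sum fun k t => Finsupp.single (p.1, k) t))

/-- the adjoint diagonal action of `𝓛` on `𝓛 ⊗ 𝓛 ⊗ 𝓛`. -/
def act3 (x : Lsa) (w : W) : W :=
  x.sum fun i a => w.sum fun p c =>
    (a * c) •
      (((bk i p.1).sum fun k t => Finsupp.single (k, p.2.1, p.2.2) t)
        + sgn (par i * par p.1) •
            ((bk i p.2.1).sum fun k t => Finsupp.single (p.1, k, p.2.2) t)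
        + sgn (par i * (par p.1 + par p.2.1)) •
            ((bk i p.2.2).sum fun k t => Finsupp.single (p.1, p.2.1, k) t))

/-- the adjoint diagonal action of `𝓛` on the `n`-fold tensor power `𝓛^{⊗n}`,
realized as the free complex vector space on `n`-tuples of basis indices:
`x ∗ (a₁ ⊗ ⋯ ⊗ aₙ) = Σ_k (-1)^{[x]([a₁]+⋯+[a_{k-1}])} a₁ ⊗ ⋯ ⊗ [x,a_k] ⊗ ⋯ ⊗ aₙ`. -/
def actN (n : ℕ) (x : Lsa) (v : (Fin n → Idx) →₀ ℂ) : (Fin n → Idx) →₀ ℂ :=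
  x.sum fun i a => v.sum fun f c =>
    (a * c) •
      (Finset.univ.sum fun k : Fin n =>
        sgn (par i * ((Finset.univ.filter fun l => l < k).sum fun l => par (f l))) •
          ((bk i (f k)).sum fun j t => Finsupp.single (Function.update f k j) t))

/-- the super-twist map `τ : 𝓛 ⊗ 𝓛 → 𝓛 ⊗ 𝓛`, `τ(x ⊗ y) = (-1)^{[x][y]} y ⊗ x`. -/
def tau (v : V) : V :=
  v.sum fun p c => (sgn (par p.1 * par p.2) * c) • Finsupp.single (p.2, p.1) 1

/-- the image `Im(1⊗1 - τ) ⊂ 𝓛 ⊗ 𝓛`. -/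
def ImOneSubTau : Set V := Set.range fun v : V => v - tau v

/-- the super-cyclic map `ξ` on `𝓛 ⊗ 𝓛 ⊗ 𝓛`:
`ξ(x₁ ⊗ x₂ ⊗ x₃) = (-1)^{[x₁]([x₂]+[x₃])} x₂ ⊗ x₃ ⊗ x₁`. -/
def xi (w : W) : W :=
  w.sum fun p c =>
    (sgn (par p.1 * (par p.2.1 + par p.2.2)) * c) • Finsupp.single (p.2.1, p.2.2, p.1) 1

/-- `c(r) = [r¹², r¹³] + [r¹², r²³] + [r¹³, r²³] ∈ 𝓛 ⊗ 𝓛 ⊗ 𝓛` for `r ∈ 𝓛 ⊗ 𝓛`. -/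
def cYB (r : V) : W :=
  r.sum fun p a => r.sum fun q b =>
    (a * b) •
      (sgn (par q.1 * par p.2) •
          ((bk p.1 q.1).sum fun k t => Finsupp.single (k, p.2, q.2) t)
        + ((bk p.2 q.1).sum fun k t => Finsupp.single (p.1, k, q.2) t)
        + sgn (par q.1 * par p.2) •
            ((bk p.2 q.2).sum fun k t => Finsupp.single (p.1, q.1, k) t))

/-- `1 ⊗ D : 𝓛 ⊗ 𝓛 → 𝓛 ⊗ 𝓛 ⊗ 𝓛` for an even map `D : 𝓛 → 𝓛 ⊗ 𝓛`. -/
def oneTensorMap (D : Lsa → V) (v : V) : W :=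
  v.sum fun p c => c • ((D (e p.2)).sum fun q t => Finsupp.single (p.1, q.1, q.2) t)

/-- `r ∈ 𝓛 ⊗ 𝓛` is homogeneous of parity `ε ∈ ℤ₂`. -/
def IsParityV (ε : ZMod 2) (r : V) : Prop := ∀ p ∈ r.support, par p.1 + par p.2 = ε

/-- `r ∈ 𝓛 ⊗ 𝓛` is even (degree `0̄`). -/
def IsEvenV (r : V) : Prop := IsParityV 0 r

/-- `r` lies in the graded component `V_ι = Σ_{j+k=ι} 𝓛_j ⊗ 𝓛_k` of `V = 𝓛 ⊗ 𝓛`. -/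
def IsDegV (ι : ℚ) (r : V) : Prop := ∀ p ∈ r.support, qdeg p.1 + qdeg p.2 = ι

/-- the linear map `𝓛 → M` with the prescribed values on the basis. -/
def ofBasis {M : Type*} [AddCommMonoid M] [Module ℂ M] (g : Idx → M) : Lsa →ₗ[ℂ] M :=
  Finsupp.lsum ℂ fun i => LinearMap.toSpanSingleton ℂ M (g i)

/-- the inner super-derivation `a_inn` attached to `a ∈ 𝓛 ⊗ 𝓛` of parity `ε`:
`a_inn(x) = (-1)^{[a][x]} x ∗ a` for homogeneous `x`, extended linearly. -/
def innMap (ε : ZMod 2) (a : V) : Lsa →ₗ[ℂ] V :=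
  ofBasis fun i => sgn (ε * par i) • act2 (e i) a

/-- `d : 𝓛 → 𝓛 ⊗ 𝓛` is a super-derivation of parity `ε`:
`d(𝓛_ī) ⊆ V_{ī+ε}` and
`d([x,y]) = (-1)^{[d][x]} x ∗ d(y) - (-1)^{[y]([d]+[x])} y ∗ d(x)`
for homogeneous `x, y` (stated on basis elements and extended bilinearly). -/
def IsDerOfParity (ε : ZMod 2) (d : Lsa →ₗ[ℂ] V) : Prop :=
  (∀ i : Idx, IsParityV (par i + ε) (d (e i))) ∧
  (∀ i j : Idx,
    d (bk i j)
      = sgn (ε * par i) • act2 (e i) (d (e j))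
        - sgn (par j * (ε + par i)) • act2 (e j) (d (e i)))

/-- `d` is homogeneous of degree `ι ∈ (1/2)ℤ` with respect to the `(1/2)ℤ`-grading:
`d(𝓛_j) ⊆ V_{ι+j}`. -/
def IsDegHomogDer (ι : ℚ) (d : Lsa →ₗ[ℂ] V) : Prop :=
  ∀ i : Idx, IsDegV (ι + qdeg i) (d (e i))

/-- `D : 𝓛 → 𝓛 ⊗ 𝓛` defines a Lie super-bialgebra structure on `𝓛`: it is linear,
`D(𝓛_ī) ⊆ Σ_j 𝓛_j̄ ⊗ 𝓛_{ī-j̄}`, `Im D ⊆ Im(1⊗1-τ)`,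
`(1⊗1⊗1 + ξ + ξ²)(1 ⊗ D)D = 0`, and
`D([x,y]) = x ∗ D(y) - (-1)^{[x][y]} y ∗ D(x)`. -/
structure IsLieSuperBialgebraDelta (D : Lsa → V) : Prop where
  linear : IsLinearMap ℂ D
  parity : ∀ i : Idx, IsParityV (par i) (D (e i))
  skewIm : ∀ x : Lsa, D x ∈ ImOneSubTau
  coJacobi : ∀ x : Lsa,
    oneTensorMap D (D x) + xi (oneTensorMap D (D x)) + xi (xi (oneTensorMap D (D x))) = 0
  cocycle : ∀ i j : Idx,
    D (bk i j) = act2 (e i) (D (e j)) - sgn (par i * par j) • act2 (e j) (D (e i))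

set_option linter.unusedSimpArgs false
@[simp] lemma ofBasis_e {M : Type*} [AddCommMonoid M] [Module ℂ M] (g : Idx → M) (i : Idx) :
    ofBasis g (e i) = g i := by
  simp [ofBasis, e]

lemma hom_ext {M : Type*} [AddCommMonoid M] [Module ℂ M] {f g : Lsa →ₗ[ℂ] M}
    (h : ∀ i, f (e i) = g (e i)) : f = g := by
  apply Finsupp.lhom_ext
  intro i b
  have : Finsupp.single i b = b • e i := by simp [e]
  rw [this, map_smul, map_smul, h]

/-- the bracket as a bilinear map -/
def B : Lsa →ₗ[ℂ] Lsa →ₗ[ℂ] Lsa := ofBasis fun i => ofBasis fun j => bk i j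
/-- pure tensors in `V` -/
def m2 : Lsa →ₗ[ℂ] Lsa →ₗ[ℂ] V := ofBasis fun i => ofBasis fun j => Finsupp.single (i, j) 1
/-- pure tensors in `W` -/
def m3 : Lsa →ₗ[ℂ] Lsa →ₗ[ℂ] Lsa →ₗ[ℂ] W :=
  ofBasis fun i => ofBasis fun j => ofBasis fun k => Finsupp.single (i, j, k) 1
/-- sign operator -/
def Sg (ε : ZMod 2) : Lsa →ₗ[ℂ] Lsa := ofBasis fun a => sgn (ε * par a) • e a

@[simp] lemma B_e (i j : Idx) : B (e i) (e j) = bk i j := by simp [B]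
@[simp] lemma m2_e (i j : Idx) : m2 (e i) (e j) = Finsupp.single (i, j) 1 := by simp [m2]
@[simp] lemma m3_e (i j k : Idx) : m3 (e i) (e j) (e k) = Finsupp.single (i, j, k) 1 := by
  simp [m3]
@[simp] lemma Sg_e (ε : ZMod 2) (i : Idx) : Sg ε (e i) = sgn (ε * par i) • e i := by simp [Sg]

lemma lsum_eq {M : Type*} [AddCommMonoid M] [Module ℂ M] (f : Lsa →ₗ[ℂ] M) (y : Lsa) :
    f y = y.sum fun k t => t • f (e k) := by
  conv_lhs => rw [← Finsupp.sum_single y]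
  rw [map_finsuppSum]
  refine Finsupp.sum_congr fun k _ => ?_
  rw [← map_smul]; simp [e]

lemma sum_m2l (y : Lsa) (b : Idx) : (y.sum fun k t => (Finsupp.single (k, b) t : V)) = m2 y (e b) := by
  have := lsum_eq (m2.flip (e b)) y
  simpa using this.symm
lemma sum_m2r (y : Lsa) (b : Idx) : (y.sum fun k t => (Finsupp.single (b, k) t : V)) = m2 (e b) y := by
  have := lsum_eq (m2 (e b)) y
  simpa using this.symm
lemma sum_m31 (y : Lsa) (b c : Idx) :
    (y.sum fun k t => (Finsupp.single (k, b, c) t : W)) = m3 y (e b) (e c) := by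
  have := lsum_eq ((m3.flip (e b)).flip (e c)) y
  simpa using this.symm
lemma sum_m32 (y : Lsa) (b c : Idx) :
    (y.sum fun k t => (Finsupp.single (b, k, c) t : W)) = m3 (e b) y (e c) := by
  have := lsum_eq ((m3 (e b)).flip (e c)) y
  simpa using this.symm
lemma sum_m33 (y : Lsa) (b c : Idx) :
    (y.sum fun k t => (Finsupp.single (b, c, k) t : W)) = m3 (e b) (e c) y := by
  have := lsum_eq (m3 (e b) (e c)) y
  simpa using this.symm

/-- linear map on `V` from values on basis -/
def ofV {M : Type*} [AddCommMonoid M] [Module ℂ M] (g : Idx × Idx → M) : V →ₗ[ℂ] M :=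
  Finsupp.lsum ℂ fun p => LinearMap.toSpanSingleton ℂ M (g p)
/-- linear map on `W` from values on basis -/
def ofW {M : Type*} [AddCommMonoid M] [Module ℂ M] (g : Idx × Idx × Idx → M) : W →ₗ[ℂ] M :=
  Finsupp.lsum ℂ fun p => LinearMap.toSpanSingleton ℂ M (g p)
lemma ofV_apply {M : Type*} [AddCommMonoid M] [Module ℂ M] (g : Idx × Idx → M) (v : V) :
    ofV g v = v.sum fun p c => c • g p := by
  simp only [ofV, Finsupp.lsum_apply]; rfl
lemma ofW_apply {M : Type*} [AddCommMonoid M] [Module ℂ M] (g : Idx × Idx × Idx → M) (v : W) :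
    ofW g v = v.sum fun p c => c • g p := by
  simp only [ofW, Finsupp.lsum_apply]; rfl
@[simp] lemma ofV_single {M : Type*} [AddCommMonoid M] [Module ℂ M] (g : Idx × Idx → M) (p) (c : ℂ):
    ofV g (Finsupp.single p c) = c • g p := by simp [ofV]
@[simp] lemma ofW_single {M : Type*} [AddCommMonoid M] [Module ℂ M] (g : Idx × Idx × Idx → M) (p)
    (c : ℂ) : ofW g (Finsupp.single p c) = c • g p := by simp [ofW]

lemma homV_ext {M : Type*} [AddCommMonoid M] [Module ℂ M] {f g : V →ₗ[ℂ] M}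
    (h : ∀ i j, f (m2 (e i) (e j)) = g (m2 (e i) (e j))) : f = g := by
  apply Finsupp.lhom_ext
  rintro ⟨i, j⟩ b
  have : (Finsupp.single (i, j) b : V) = b • m2 (e i) (e j) := by simp
  rw [this, map_smul, map_smul, h]
lemma homW_ext {M : Type*} [AddCommMonoid M] [Module ℂ M] {f g : W →ₗ[ℂ] M}
    (h : ∀ i j k, f (m3 (e i) (e j) (e k)) = g (m3 (e i) (e j) (e k))) : f = g := by
  apply Finsupp.lhom_ext
  rintro ⟨i, j, k⟩ b
  have : (Finsupp.single (i, j, k) b : W) = b • m3 (e i) (e j) (e k) := by simp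
  rw [this, map_smul, map_smul, h]

/-- action on `V` -/
def A (i : Idx) : V →ₗ[ℂ] V := ofV fun p =>
  m2 (bk i p.1) (e p.2) + sgn (par i * par p.1) • m2 (e p.1) (bk i p.2)
/-- action on `W` -/
def A3 (i : Idx) : W →ₗ[ℂ] W := ofW fun p =>
  m3 (bk i p.1) (e p.2.1) (e p.2.2) + sgn (par i * par p.1) • m3 (e p.1) (bk i p.2.1) (e p.2.2)
   + sgn (par i * (par p.1 + par p.2.1)) • m3 (e p.1) (e p.2.1) (bk i p.2.2)

lemma act2_eq (x : Lsa) (v : V) : act2 x v = x.sum fun i a => a • A i v := by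
  unfold act2
  refine Finsupp.sum_congr fun i _ => ?_
  simp only [sum_m2l, sum_m2r, A, ofV_apply, Finsupp.smul_sum, smul_smul]
/-- the action as a bilinear map -/
def AA : Lsa →ₗ[ℂ] V →ₗ[ℂ] V := ofBasis A
lemma act2_AA (x : Lsa) (v : V) : act2 x v = AA x v := by
  have := lsum_eq (AA.flip v) x
  simp [AA] at this
  rw [act2_eq, AA, this]
@[simp] lemma act2_e (i : Idx) (v : V) : act2 (e i) v = A i v := by
  simp [act2_AA, AA]

lemma A_m2 (i : Idx) (x y : Lsa) :
    A i (m2 x y) = m2 (B (e i) x) y + m2 (Sg (par i) x) (B (e i) y) := by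
  have : (m2.compr₂ (A i)) = m2.comp (B (e i)) + (m2.compl₁₂ (Sg (par i)) (B (e i))) := by
    apply hom_ext; intro a; apply hom_ext; intro b
    simp [A]
  simpa using congrArg (fun f => f x y) this

@[simp] lemma sgn_zero : sgn 0 = 1 := by simp [sgn]
@[simp] lemma sgn_one : sgn 1 = -1 := by simp [sgn]
lemma sgn_mul_self (a : ZMod 2) : sgn a * sgn a = 1 := by
  unfold sgn; split_ifs <;> norm_num

lemma zmod2_cases (a : ZMod 2) : a = 0 ∨ a = 1 := by
  revert a; decide
@[simp] lemma one_add_one_zmod : (1 + 1 : ZMod 2) = 0 := rfl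
lemma sgn_add (a b : ZMod 2) : sgn (a + b) = sgn a * sgn b := by
  rcases zmod2_cases a with rfl | rfl <;> rcases zmod2_cases b with rfl | rfl <;> simp

/-- homogeneous of given parity -/
def Hom (ε : ZMod 2) (x : Lsa) : Prop := ∀ δ, Sg δ x = sgn (δ * ε) • x
lemma Hom_e (i : Idx) : Hom (par i) (e i) := by intro δ; simp
lemma Hom_smul {ε x} (c : ℂ) (h : Hom ε x) : Hom ε (c • x) := by
  intro δ; simp [h δ, smul_comm c]
lemma Hom_neg {ε x} (h : Hom ε x) : Hom ε (-x) := by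
  intro δ; simp [h δ]
lemma Hom_bk (i j : Idx) : Hom (par i + par j) (bk i j) := by
  rcases i with m | m | m <;> rcases j with n | n | n <;> simp only [bk, par]
  · exact Hom_smul _ (Hom_e _)
  · exact Hom_smul _ (Hom_e _)
  · exact Hom_smul _ (Hom_e _)
  · exact Hom_smul _ (Hom_e _)
  · intro δ; simp
  · exact (Hom_e _)
  · exact Hom_smul _ (Hom_e _)
  · exact Hom_neg (Hom_e _)
  · split_ifs
    · exact Hom_smul _ (Hom_e _)
    · exact Hom_smul _ (Hom_e _)

lemma Sg_B (ε : ZMod 2) (i : Idx) (x : Lsa) :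
    Sg ε (B (e i) x) = sgn (ε * par i) • B (e i) (Sg ε x) := by
  have : (Sg ε).comp (B (e i)) = sgn (ε * par i) • (B (e i)).comp (Sg ε) := by
    apply hom_ext; intro j
    simp only [LinearMap.comp_apply, B_e, LinearMap.smul_apply, Sg_e, map_smul]
    rw [Hom_bk i j ε, smul_smul]
    congr 1
    rw [mul_add, sgn_add, mul_comm]
  simpa using congrArg (fun f => f x) this

lemma neg_one_zpow_even (a : ℤ) : (-1 : ℂ) ^ (2 * a) = 1 := by
  rw [zpow_mul]; norm_num
lemma neg_one_zpow_odd (a : ℤ) : (-1 : ℂ) ^ (2 * a + 1) = -1 := by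
  rw [zpow_add₀ (by norm_num), neg_one_zpow_even]; norm_num
lemma bk_ee (a b : ℤ) : bk (.G (2*a)) (.G (2*b)) = (2:ℂ) • e (.L (a+b)) := by
  simp only [bk]
  rw [if_pos (by omega), neg_one_zpow_even, show (2*a+2*b)/2 = a+b by omega, one_mul]
lemma bk_oo (a b : ℤ) : bk (.G (2*a+1)) (.G (2*b+1)) = (-2:ℂ) • e (.L (a+b+1)) := by
  simp only [bk]
  rw [if_pos (by omega), neg_one_zpow_odd, show (2*a+1+(2*b+1))/2 = a+b+1 by omega]
  norm_num
lemma bk_eo (a b : ℤ) :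
    bk (.G (2*a)) (.G (2*b+1)) = ((b:ℂ) - a + 1/2) • e (.T (a+b)) := by
  simp only [bk]
  rw [if_neg (by omega), neg_one_zpow_odd, show (2*a+(2*b+1)-1)/2 = a+b by omega]
  congr 1; push_cast; ring
lemma bk_oe (a b : ℤ) :
    bk (.G (2*a+1)) (.G (2*b)) = ((a:ℂ) - b + 1/2) • e (.T (a+b)) := by
  simp only [bk]
  rw [if_neg (by omega), show 2*a+1+1 = 2*(a+1) by ring, neg_one_zpow_even,
    show (2*a+1+(2*b)-1)/2 = a+b by omega]
  congr 1; push_cast; ring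
lemma bk_Le (m a : ℤ) : bk (.L m) (.G (2*a)) = ((m:ℂ)/2 - a) • e (.G (2*(a+m))) := by
  simp only [bk]; rw [mul_add]; congr 1; push_cast; ring
lemma bk_Lo (m a : ℤ) : bk (.L m) (.G (2*a+1)) = ((m:ℂ)/2 - a - 1/2) • e (.G (2*(a+m)+1)) := by
  simp only [bk]; rw [show 2*a+1+2*m = 2*(a+m)+1 by ring]; congr 1; push_cast; ring
lemma bk_eL (m a : ℤ) : bk (.G (2*a)) (.L m) = (-((m:ℂ)/2 - a)) • e (.G (2*(a+m))) := by
  simp only [bk]; rw [mul_add]; congr 1; push_cast; ring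
lemma bk_oL (m a : ℤ) : bk (.G (2*a+1)) (.L m) = (-((m:ℂ)/2 - a - 1/2)) • e (.G (2*(a+m)+1)) := by
  simp only [bk]; rw [show 2*a+1+2*m = 2*(a+m)+1 by ring]; congr 1; push_cast; ring
lemma bk_Te (m a : ℤ) : bk (.T m) (.G (2*a)) = e (.G (2*(a+m)+1)) := by
  simp only [bk]; rw [show 2*a+2*m+1 = 2*(a+m)+1 by ring]
lemma bk_To (m a : ℤ) : bk (.T m) (.G (2*a+1)) = e (.G (2*(a+m+1))) := by
  simp only [bk]; rw [show 2*a+1+2*m+1 = 2*(a+m+1) by ring]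
lemma bk_eT (m a : ℤ) : bk (.G (2*a)) (.T m) = -e (.G (2*(a+m)+1)) := by
  simp only [bk]; rw [show 2*a+2*m+1 = 2*(a+m)+1 by ring]
lemma bk_oT (m a : ℤ) : bk (.G (2*a+1)) (.T m) = -e (.G (2*(a+m+1))) := by
  simp only [bk]; rw [show 2*a+1+2*m+1 = 2*(a+m+1) by ring]
lemma bk_LL (m n : ℤ) : bk (.L m) (.L n) = ((m : ℂ) - n) • e (.L (m + n)) := rfl
lemma bk_LT (m k : ℤ) : bk (.L m) (.T k) = (-((k : ℂ) + 1/2)) • e (.T (k + m)) := rfl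
lemma bk_TL (m k : ℤ) : bk (.T k) (.L m) = ((k : ℂ) + 1/2) • e (.T (k + m)) := rfl
lemma bk_TT (m k : ℤ) : bk (.T k) (.T m) = 0 := rfl

/-- induction principle splitting the fermionic indices by parity -/
lemma idx_cases {P : Idx → Prop} (hL : ∀ m, P (.L m)) (hT : ∀ m, P (.T m))
    (he : ∀ a, P (.G (2*a))) (ho : ∀ a, P (.G (2*a+1))) (i : Idx) : P i := by
  rcases i with m | m | n
  · exact hL m
  · exact hT m
  · rcases Int.even_or_odd' n with ⟨a, rfl | rfl⟩
    · exact he a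
    · exact ho a

lemma par_L (m) : par (.L m) = 0 := rfl
lemma par_T (m) : par (.T m) = 0 := rfl
lemma par_G (m) : par (.G m) = 1 := rfl

lemma bk_skew (i j : Idx) : bk i j = -(sgn (par i * par j) • bk j i) := by
  induction i using idx_cases <;> induction j using idx_cases <;>
    simp only [bk_ee, bk_oo, bk_eo, bk_oe, bk_Le, bk_Lo, bk_eL, bk_oL, bk_Te, bk_To, bk_eT,
      bk_oT, bk_LL, bk_LT, bk_TL, bk_TT, par_L, par_T, par_G, mul_zero, zero_mul, mul_one,
      sgn_zero, sgn_one, one_smul, neg_zero, smul_zero] <;>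
    (try simp only [add_assoc, add_comm, add_left_comm]) <;>
    module

lemma jac_e (i j k : Idx) :
    B (bk i j) (e k) = B (e i) (bk j k) - sgn (par i * par j) • B (e j) (bk i k) := by
  induction i using idx_cases <;> induction j using idx_cases <;> induction k using idx_cases <;>
    simp only [bk_ee, bk_oo, bk_eo, bk_oe, bk_Le, bk_Lo, bk_eL, bk_oL, bk_Te, bk_To, bk_eT,
      bk_oT, bk_LL, bk_LT, bk_TL, bk_TT, par_L, par_T, par_G, mul_zero, zero_mul, mul_one,
      sgn_zero, sgn_one, one_smul, neg_zero, smul_zero, map_smul, map_neg, map_zero, B_e,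
      LinearMap.smul_apply, LinearMap.neg_apply, LinearMap.zero_apply, smul_neg,
      Int.cast_add, Int.cast_one, sub_zero] <;>
    (try simp only [add_assoc, add_comm, add_left_comm]) <;>
    module

lemma jac (i j : Idx) (x : Lsa) :
    B (bk i j) x = B (e i) (B (e j) x) - sgn (par i * par j) • B (e j) (B (e i) x) := by
  have : B (bk i j) = (B (e i)).comp (B (e j))
      - sgn (par i * par j) • (B (e j)).comp (B (e i)) := by
    apply hom_ext; intro k
    simpa using jac_e i j k
  simpa using congrArg (fun f => f x) this

lemma AA_m2_hom {ε : ZMod 2} (z x y : Lsa) (hz : ∃ i c, z = (c:ℂ) • e i ∧ (c ≠ 0 → par i = ε)) :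
    AA z (m2 x y) = m2 (B z x) y + m2 (Sg ε x) (B z y) := by
  obtain ⟨i, c, rfl, h⟩ := hz
  by_cases hc : c = 0
  · simp [hc]
  · rw [map_smul]
    simp only [AA, ofBasis_e, LinearMap.smul_apply, A_m2, map_smul, h hc]
    module

lemma bk_form (i j : Idx) : ∃ k c, bk i j = (c:ℂ) • e k ∧ (c ≠ 0 → par k = par i + par j) := by
  rcases i with m | m | m <;> rcases j with n | n | n
  · exact ⟨_, _, rfl, fun _ => rfl⟩
  · exact ⟨_, _, rfl, fun _ => rfl⟩
  · exact ⟨_, _, rfl, fun _ => rfl⟩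
  · exact ⟨_, _, rfl, fun _ => rfl⟩
  · exact ⟨.L 0, 0, by simp [bk], fun h => absurd rfl h⟩
  · exact ⟨_, 1, (one_smul _ _).symm, fun _ => rfl⟩
  · exact ⟨_, _, rfl, fun _ => rfl⟩
  · exact ⟨.G (m + 2*n + 1), -1, by simp [bk], fun _ => rfl⟩
  · simp only [bk]
    split_ifs
    · exact ⟨_, _, rfl, fun _ => rfl⟩
    · exact ⟨_, _, rfl, fun _ => rfl⟩

lemma Sg_Sg (a b : ZMod 2) (x : Lsa) : Sg a (Sg b x) = Sg (a + b) x := by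
  have : (Sg a).comp (Sg b) = Sg (a + b) := by
    apply hom_ext; intro k
    simp only [LinearMap.comp_apply, Sg_e, map_smul, smul_smul, add_mul, sgn_add]
    rw [mul_comm]
  simpa using congrArg (fun f => f x) this

lemma module_law (i j : Idx) (v : V) :
    AA (bk i j) v = A i (A j v) - sgn (par i * par j) • A j (A i v) := by
  have : AA (bk i j) = (A i).comp (A j) - sgn (par i * par j) • (A j).comp (A i) := by
    apply homV_ext; intro a b
    rw [AA_m2_hom _ (e a) (e b) (bk_form i j), LinearMap.sub_apply, LinearMap.smul_apply,
      LinearMap.comp_apply, LinearMap.comp_apply, A_m2, A_m2, map_add, map_add,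
      A_m2, A_m2, A_m2, A_m2, jac i j, jac i j]
    simp only [Sg_B, Sg_Sg, map_sub, map_smul, LinearMap.sub_apply, LinearMap.smul_apply,
      mul_comm (par j) (par i), add_comm (par j) (par i)]
    have h := sgn_mul_self (par i * par j)
    set s := sgn (par i * par j)
    match_scalars <;> first | ring1 | linear_combination h | linear_combination -h
  simpa using congrArg (fun f => f v) this

/-- the unique index `j` for which `[i, j]` can have a component along `a` -/
def pre : Idx → Idx → Idx
  | .L m, .L n => .L (n - m)
  | .L m, .T k => .T (k - m)
  | .L m, .G n => .G (n - 2*m)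
  | .T _, .L _ => .L 0
  | .T k, .T n => .L (n - k)
  | .T k, .G n => .G (n - 2*k - 1)
  | .G n, .L m => .G (2*m - n)
  | .G n, .T m => .G (2*m + 1 - n)
  | .G n, .G m => if (m - n) % 2 = 0 then .L ((m - n)/2) else .T ((m - n - 1)/2)
/-- the corresponding coefficient -/
def cf : Idx → Idx → ℂ
  | .L m, .L n => 2*m - n
  | .L m, .T k => m - k - 1/2
  | .L m, .G n => (3*m - n)/2
  | .T _, .L _ => 0
  | .T k, .T _ => k + 1/2
  | .T _, .G _ => 1
  | .G n, .L _ => (-1 : ℂ) ^ n * 2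
  | .G n, .T m => (-1 : ℂ) ^ (n+1) * (n - m - 1/2)
  | .G n, .G m => if (m - n) % 2 = 0 then (3*n - m)/4 else -1

lemma bk_pre (i a : Idx) : (bk i (pre i a)) a = cf i a := by
  rcases i with m | m | m <;> rcases a with k | k | k
  · simp [bk, pre, cf, e]; ring
  · simp [bk, pre, cf, e]; ring
  · simp [bk, pre, cf, e]; ring
  · simp [bk, pre, cf, e]
  · simp [bk, pre, cf, e]
  · simp only [bk, pre, cf, e]
    rw [show k - 2 * m - 1 + 2 * m + 1 = k by ring]; simp
  · simp only [bk, pre, cf]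
    rw [if_pos (by omega), show (m + (2 * k - m)) / 2 = k by omega]; simp [e]
  · simp only [bk, pre, cf]
    rw [if_neg (by omega), show (m + (2 * k + 1 - m) - 1) / 2 = k by omega]; simp [e]; left; ring
  · by_cases h : (k - m) % 2 = 0
    · simp only [pre, cf, if_pos h, bk]
      rw [show m + 2 * ((k - m) / 2) = k by omega]
      obtain ⟨c, hc⟩ : ∃ c, k = m + 2 * c := ⟨(k - m)/2, by omega⟩
      rw [show (k - m) / 2 = c by omega, hc]
      simp [e]; ring
    · simp only [pre, cf, if_neg h, bk]
      rw [show m + 2 * ((k - m - 1) / 2) + 1 = k by omega]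
      simp [e]

lemma bk_pre' (i j a : Idx) (h : (bk i j) a ≠ 0) : j = pre i a := by
  rcases i with m | m | m <;> rcases j with n | n | n <;> rcases a with k | k | k
  case G.G.L =>
    simp only [bk] at h
    split_ifs at h with h1 <;> simp [e, Finsupp.single_apply, pre] at h ⊢
    omega
  case G.G.T =>
    simp only [bk] at h
    split_ifs at h with h1 <;> simp [e, Finsupp.single_apply, pre] at h ⊢
    omega
  case G.G.G =>
    simp only [bk] at h
    split_ifs at h with h1 <;> simp [e] at h
  case G.L.G =>
    simp [bk, e, Finsupp.single_apply] at h
    simp only [pre]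
    rw [if_pos (by omega)]; congr 1; omega
  case G.T.G =>
    simp [bk, e, Finsupp.single_apply] at h
    simp only [pre]
    rw [if_neg (by omega)]; congr 1; omega
  all_goals
    simp [bk, e, Finsupp.single_apply, pre] at h ⊢
  all_goals first | omega | (obtain ⟨h1, h2⟩ := h; omega) |
    (by_contra h'; apply h; rw [if_neg (by omega), if_neg (by omega)]; simp)

lemma bk_coord (i j a : Idx) : (bk i j) a = if j = pre i a then cf i a else 0 := by
  split_ifs with h
  · rw [h, bk_pre]
  · by_contra h'; exact h (bk_pre' i j a h')

lemma par_pre (i a : Idx) (h : cf i a ≠ 0) : par (pre i a) = par i + par a := by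
  rcases i with m | m | m <;> rcases a with k | k | k
  case G.G => simp only [pre]; split_ifs <;> rfl
  case T.L => exact absurd rfl h
  all_goals rfl

lemma e_apply (i j : Idx) : e i j = if i = j then 1 else 0 := by
  simp [e, Finsupp.single_apply]

lemma m2_coord (x y : Lsa) (a b : Idx) : m2 x y (a, b) = x a * y b := by
  have : (m2.compr₂ (Finsupp.lapply (a, b))) =
      (LinearMap.mul ℂ ℂ).compl₁₂ (Finsupp.lapply a) (Finsupp.lapply b) := by
    apply hom_ext; intro i; apply hom_ext; intro j
    simp only [LinearMap.compr₂_apply, m2_e, Finsupp.lapply_apply, Finsupp.single_apply,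
      LinearMap.compl₁₂_apply, LinearMap.mul_apply', e_apply, Prod.mk.injEq]
    by_cases h1 : i = a <;> by_cases h2 : j = b <;> simp [h1, h2]
  simpa using congrArg (fun f => f x y) this
lemma m3_coord (x y z : Lsa) (a b c : Idx) : m3 x y z (a, b, c) = x a * y b * z c := by
  have h3 : ∀ i j, (Finsupp.lapply (R := ℂ) (M := ℂ) (a, b, c)) ∘ₗ m3 (e i) (e j) =
      (e i a * e j b) • Finsupp.lapply c := by
    intro i j
    apply hom_ext; intro k
    simp only [LinearMap.comp_apply, m3_e, Finsupp.lapply_apply, Finsupp.single_apply,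
      LinearMap.smul_apply, smul_eq_mul, e_apply, Prod.mk.injEq]
    by_cases h1 : i = a <;> by_cases h2 : j = b <;> by_cases h3 : k = c <;> simp [h1, h2, h3]
  have h2 : ∀ i, (Finsupp.lapply (R := ℂ) (M := ℂ) (a, b, c)) ∘ₗ (m3 (e i)).flip z =
      (e i a * z c) • Finsupp.lapply b := by
    intro i
    apply hom_ext; intro j
    have := congrArg (fun f => f z) (h3 i j)
    simp only [LinearMap.comp_apply, LinearMap.smul_apply, Finsupp.lapply_apply, smul_eq_mul,
      LinearMap.flip_apply] at this ⊢
    rw [this]; ring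
  have h1 : (Finsupp.lapply (R := ℂ) (M := ℂ) (a, b, c)) ∘ₗ (m3.flip y).flip z =
      (y b * z c) • Finsupp.lapply a := by
    apply hom_ext; intro i
    have := congrArg (fun f => f y) (h2 i)
    simp only [LinearMap.comp_apply, LinearMap.smul_apply, Finsupp.lapply_apply, smul_eq_mul,
      LinearMap.flip_apply] at this ⊢
    rw [this]; ring
  have := congrArg (fun f => f x) h1
  simp only [LinearMap.comp_apply, LinearMap.smul_apply, Finsupp.lapply_apply, smul_eq_mul,
      LinearMap.flip_apply] at this ⊢
  rw [this]; ring

lemma A_coord (i : Idx) (v : V) (a b : Idx) :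
    A i v (a, b) = cf i a * v (pre i a, b) + sgn (par i * par a) * cf i b * v (a, pre i b) := by
  have : (Finsupp.lapply (R := ℂ) (M := ℂ) (a, b)) ∘ₗ (A i) =
      cf i a • Finsupp.lapply (pre i a, b)
        + (sgn (par i * par a) * cf i b) • Finsupp.lapply (a, pre i b) := by
    apply homV_ext; intro p q
    simp only [LinearMap.comp_apply, A, LinearMap.add_apply, LinearMap.smul_apply,
      Finsupp.lapply_apply, m2_e, ofV_single, one_smul, Finsupp.add_apply, Finsupp.smul_apply,
      m2_coord, smul_eq_mul, bk_coord, e_apply, Finsupp.single_apply, Prod.mk.injEq]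
    congr 1
    · split_ifs <;> simp_all
    · by_cases h1 : p = a
      · subst h1; split_ifs <;> simp_all
      · simp [h1]
  simpa using congrArg (fun f => f v) this

lemma A3_coord (i : Idx) (v : W) (a b c : Idx) :
    A3 i v (a, b, c) = cf i a * v (pre i a, b, c)
      + sgn (par i * par a) * cf i b * v (a, pre i b, c)
      + sgn (par i * (par a + par b)) * cf i c * v (a, b, pre i c) := by
  have : (Finsupp.lapply (R := ℂ) (M := ℂ) (a, b, c)) ∘ₗ (A3 i) =
      cf i a • Finsupp.lapply (pre i a, b, c)
        + (sgn (par i * par a) * cf i b) • Finsupp.lapply (a, pre i b, c)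
        + (sgn (par i * (par a + par b)) * cf i c) • Finsupp.lapply (a, b, pre i c) := by
    apply homW_ext; intro p q r
    simp only [LinearMap.comp_apply, A3, LinearMap.add_apply, LinearMap.smul_apply,
      Finsupp.lapply_apply, m3_e, ofW_single, one_smul, Finsupp.add_apply, Finsupp.smul_apply,
      m3_coord, smul_eq_mul, bk_coord, e_apply, Finsupp.single_apply, Prod.mk.injEq]
    congr 1
    · congr 1
      · split_ifs <;> simp_all
      · by_cases h1 : p = a
        · subst h1; split_ifs <;> simp_all
        · simp [h1]
    · by_cases h1 : p = a
      · subst h1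
        by_cases h2 : q = b
        · subst h2; split_ifs <;> simp_all
        · simp [h2]
      · simp [h1]
  simpa using congrArg (fun f => f v) this

lemma isParity_iff (ε : ZMod 2) (v : V) :
    IsParityV ε v ↔ ∀ a b, par a + par b ≠ ε → v (a, b) = 0 := by
  constructor
  · intro h a b hab
    by_contra h'
    exact hab (h (a, b) (by simpa using h'))
  · rintro h ⟨a, b⟩ hp
    by_contra h'
    exact (by simpa using hp : v (a, b) ≠ 0) (h a b h')

lemma A_parity {ε : ZMod 2} {v : V} (i : Idx) (h : IsParityV ε v) : IsParityV (par i + ε) (A i v) := by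
  rw [isParity_iff] at *
  intro a b hab
  rw [A_coord]
  have h1 : cf i a * v (pre i a, b) = 0 := by
    by_cases hc : cf i a = 0
    · simp [hc]
    · rw [h _ _ ?_, mul_zero]
      rw [par_pre i a hc]
      intro h'; apply hab; rw [← h', ← add_assoc, ← add_assoc, CharTwo.add_self_eq_zero, zero_add]
  have h2 : cf i b * v (a, pre i b) = 0 := by
    by_cases hc : cf i b = 0
    · simp [hc]
    · rw [h _ _ ?_, mul_zero]
      rw [par_pre i b hc]
      intro h'; apply hab
      rw [← h', add_left_comm (par a), ← add_assoc, CharTwo.add_self_eq_zero, zero_add]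
  rw [h1, mul_assoc, h2]; simp

/-- even 1-cocycles -/
structure Coc (D : Lsa →ₗ[ℂ] V) : Prop where
  parity : ∀ i : Idx, IsParityV (par i) (D (e i))
  cocycle : ∀ i j : Idx,
    D (bk i j) = A i (D (e j)) - sgn (par i * par j) • A j (D (e i))

lemma Coc.sub_inn {D : Lsa →ₗ[ℂ] V} (h : Coc D) {r : V} (hr : IsParityV 0 r) :
    Coc (D - AA.flip r) where
  parity i := by
    have h1 := h.parity i
    have h2 := A_parity i hr
    rw [isParity_iff] at *
    intro a b hab
    simp [AA, h1 a b hab, h2 a b (by simpa using hab)]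
  cocycle i j := by
    have h1 := h.cocycle i j
    simp only [LinearMap.sub_apply, LinearMap.flip_apply, h1, module_law, map_sub]
    simp only [AA, ofBasis_e]
    module

/-- shift of an index by `L_N` -/
def sh (N : ℤ) : Idx → Idx
  | .L n => .L (n + N)
  | .T n => .T (n + N)
  | .G n => .G (n + 2 * N)
lemma pre_sh (N : ℤ) (a : Idx) : pre (.L N) (sh N a) = a := by
  cases a <;> simp [pre, sh]
lemma sh_inj (a : Idx) : Function.Injective fun N => sh N a := by
  intro N M h
  cases a <;> simp [sh] at h <;> omega
/-- the position of an index -/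
def pos : Idx → ℤ
  | .L n => n
  | .T n => n
  | .G n => n
lemma cf_sh (N : ℤ) (a : Idx) (h : N ≠ pos a) : cf (.L N) (sh N a) ≠ 0 := by
  intro h'
  cases a with
  | L n => simp [cf, sh] at h'; apply h; simp only [pos]; have : (N : ℂ) = n := by linear_combination h'
           exact_mod_cast this
  | T n => simp [cf, sh] at h'
           have : ((2 * n + 1 : ℤ) : ℂ) = 0 := by push_cast; linear_combination -2 * h'
           norm_cast at this; omega
  | G n => simp [cf, sh] at h'; apply h; simp only [pos]; have : (N : ℂ) = n := by linear_combination h'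
           exact_mod_cast this

lemma exists_sh (s : Finset Idx) (a : Idx) : ∃ N, N ≠ pos a ∧ sh N a ∉ s := by
  have h1 : ((Set.preimage (fun N => sh N a) (s : Set Idx)) ∪ {pos a}).Finite :=
    (s.finite_toSet.preimage (sh_inj a).injOn).union (Set.finite_singleton _)
  obtain ⟨N, hN⟩ := h1.infinite_compl.nonempty
  simp at hN
  exact ⟨N, by tauto, by tauto⟩

lemma inv2 (v : V) (h : ∀ N, A (.L N) v = 0) : v = 0 := by
  ext ⟨a, b⟩
  obtain ⟨N, hN, hs⟩ := exists_sh (v.support.image Prod.fst) a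
  have h1 := DFunLike.congr_fun (h N) (sh N a, b)
  rw [A_coord, pre_sh] at h1
  have h2 : ∀ c, v (sh N a, c) = 0 := by
    intro c; by_contra h'
    exact hs (Finset.mem_image.2 ⟨_, by simpa using h', rfl⟩)
  rw [h2] at h1
  simpa [cf_sh N a hN] using h1

lemma inv3 (v : W) (h : ∀ N, A3 (.L N) v = 0) : v = 0 := by
  ext ⟨a, b, c⟩
  obtain ⟨N, hN, hs⟩ := exists_sh (v.support.image Prod.fst) a
  have h1 := DFunLike.congr_fun (h N) (sh N a, b, c)
  rw [A3_coord, pre_sh] at h1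
  have h2 : ∀ c, v (sh N a, c) = 0 := by
    intro c; by_contra h'
    exact hs (Finset.mem_image.2 ⟨_, by simpa using h', rfl⟩)
  rw [h2, h2] at h1
  simpa [cf_sh N a hN] using h1

/-- twice the degree -/
def dz : Idx → ℤ
  | .L n => 2 * n
  | .T n => 2 * n + 1
  | .G n => n
lemma dz_pre (i a : Idx) (h : cf i a ≠ 0) : dz (pre i a) = dz a - dz i := by
  rcases i with m | m | m <;> rcases a with k | k | k
  case G.G => simp only [pre]; split_ifs <;> simp only [dz] <;> omega
  case T.L => exact absurd rfl h
  all_goals simp only [pre, dz] <;> omega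
/-- homogeneous of given doubled degree -/
def DegV (n : ℤ) (v : V) : Prop := ∀ a b, dz a + dz b ≠ n → v (a, b) = 0
lemma A_deg {n : ℤ} {v : V} (h : DegV n v) (i : Idx) : DegV (n + dz i) (A i v) := by
  intro a b hab
  rw [A_coord]
  have h1 : cf i a * v (pre i a, b) = 0 := by
    by_cases hc : cf i a = 0
    · simp [hc]
    · rw [h _ _ ?_, mul_zero]
      rw [dz_pre i a hc]; omega
  have h2 : cf i b * v (a, pre i b) = 0 := by
    by_cases hc : cf i b = 0
    · simp [hc]
    · rw [h _ _ ?_, mul_zero]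
      rw [dz_pre i b hc]; omega
  rw [h1, mul_assoc, h2]; simp

lemma A_L0 (v : V) (a b : Idx) : A (.L 0) v (a, b) = -((dz a + dz b : ℤ) : ℂ) / 2 * v (a, b) := by
  have h1 : ∀ a, pre (.L 0) a = a := by intro a; cases a <;> simp [pre]
  have h2 : ∀ a, cf (.L 0) a = - (dz a : ℂ) / 2 := by
    intro a; cases a <;> simp [cf, dz] <;> ring
  rw [A_coord, h1, h1, h2, h2]; simp [par]; ring

lemma bk_L0 (j : Idx) : bk (.L 0) j = (-(dz j : ℂ) / 2) • e j := by
  cases j <;> simp only [bk, dz] <;> congr 1 <;> first | (push_cast; ring) | (congr 1; ring)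

/-- normalized cocycles -/
structure Coc0 (D : Lsa →ₗ[ℂ] V) : Prop extends Coc D where
  L0 : D (e (.L 0)) = 0
  deg : ∀ i, DegV (dz i) (D (e i))

lemma Coc0.sub_inn {D : Lsa →ₗ[ℂ] V} (h : Coc0 D) {r : V} (hr : IsParityV 0 r) (hd : DegV 0 r) :
    Coc0 (D - AA.flip r) where
  toCoc := h.toCoc.sub_inn hr
  L0 := by
    ext ⟨a, b⟩
    simp only [LinearMap.sub_apply, LinearMap.flip_apply, AA, ofBasis_e, h.L0, zero_sub,
      Finsupp.neg_apply, A_L0, Finsupp.zero_apply]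
    by_cases h1 : dz a + dz b = 0
    · simp [h1]
    · rw [hd a b h1]; simp
  deg i := by
    intro a b hab
    simp only [LinearMap.sub_apply, LinearMap.flip_apply, AA, ofBasis_e, Finsupp.sub_apply]
    rw [h.deg i a b hab, A_deg hd i a b (by omega)]; simp

lemma stepA {D : Lsa →ₗ[ℂ] V} (h : Coc D) : ∃ r, IsParityV 0 r ∧ Coc0 (D - AA.flip r) := by
  set v := D (e (.L 0)) with hv
  let r : V := Finsupp.onFinset v.support
    (fun p => -2 / ((dz p.1 + dz p.2 : ℤ) : ℂ) * v p) (by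
      intro p hp; simp only [Finsupp.mem_support_iff]; intro h'; exact hp (by simp [h']))
  have hr : ∀ a b, r (a, b) = -2 / ((dz a + dz b : ℤ) : ℂ) * v (a, b) := fun a b => rfl
  have hrp : IsParityV 0 r := by
    have h1 := h.parity (.L 0)
    rw [isParity_iff] at *
    intro a b hab
    rw [hr, hv, h1 a b hab, mul_zero]
  have hc := h.sub_inn hrp
  refine ⟨r, hrp, ?_⟩
  set D' := D - AA.flip r with hD'
  have hw : DegV 0 (D' (e (.L 0))) := by
    intro a b hab
    simp only [hD', LinearMap.sub_apply, LinearMap.flip_apply, AA, ofBasis_e, Finsupp.sub_apply,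
      A_L0, hr, ← hv]
    have : ((dz a + dz b : ℤ) : ℂ) ≠ 0 := by exact_mod_cast hab
    field_simp
    ring
  have key : ∀ j a b, -(dz j : ℂ) / 2 * D' (e j) (a, b) =
      -((dz a + dz b : ℤ) : ℂ) / 2 * D' (e j) (a, b) - A j (D' (e (.L 0))) (a, b) := by
    intro j a b
    have := DFunLike.congr_fun (hc.cocycle (.L 0) j) (a, b)
    rw [bk_L0] at this
    simpa [A_L0, par] using this
  have hd : ∀ i, DegV (dz i) (D' (e i)) := by
    intro j a b hab
    have h1 := key j a b
    rw [A_deg hw j a b (by omega)] at h1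
    have : ((dz a + dz b : ℤ) : ℂ) - dz j ≠ 0 := by
      intro h'; apply hab; exact_mod_cast sub_eq_zero.1 h'
    apply mul_left_cancel₀ this
    linear_combination 2 * h1
  have h0 : D' (e (.L 0)) = 0 := by
    apply inv2; intro N
    ext ⟨a, b⟩
    by_cases hab : dz a + dz b = dz (.L N)
    · have h1 := key (.L N) a b
      rw [hab] at h1
      simp; linear_combination h1
    · exact A_deg hw (.L N) a b (by omega)
  exact { toCoc := hc, L0 := h0, deg := hd }

lemma bnd (v : V) : ∃ N : ℤ, ∀ a b, N < |pos a| → v (a, b) = 0 := by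
  refine ⟨∑ p ∈ v.support, |pos p.1|, fun a b h => ?_⟩
  by_contra h'
  have := Finset.single_le_sum (f := fun p : Idx × Idx => |pos p.1|) (fun p _ => abs_nonneg _)
    (Finsupp.mem_support_iff.2 h')
  simp only at this
  omega

lemma mkV (g : ℤ → Idx × Idx) (hg : Function.Injective g) (c : ℤ → ℂ) (N : ℤ)
    (hc : ∀ k, N < |k| → c k = 0) :
    ∃ v : V, (∀ k, v (g k) = c k) ∧ ∀ p, (∀ k, g k ≠ p) → v p = 0 := by
  let f : ℤ →₀ ℂ := Finsupp.onFinset (Finset.Icc (-N) N) c (by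
    intro k hk
    have : ¬ N < |k| := fun h => hk (hc k h)
    rw [not_lt, abs_le] at this
    simpa using this)
  refine ⟨f.mapDomain g, fun k => ?_, fun p hp => ?_⟩
  · rw [Finsupp.mapDomain_apply hg]; rfl
  · apply Finsupp.mapDomain_of_notMem_range
    rintro ⟨k, hk⟩; exact hp k hk

/-- no `G ⊗ G` component -/
def GG0 (v : V) : Prop := ∀ a b, v (.G a, .G b) = 0

lemma A_T_GG (k : ℤ) (v : V) (a b : ℤ) : A (.T k) v (.G a, .G b) =
    v (.G (a - 2*k - 1), .G b) + v (.G a, .G (b - 2*k - 1)) := by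
  simp [A_coord, cf, pre, par]
lemma A_L_GG (m : ℤ) (v : V) (a b : ℤ) : A (.L m) v (.G a, .G b) =
    (3*m - a)/2 * v (.G (a - 2*m), .G b) + (3*m - b)/2 * v (.G a, .G (b - 2*m)) := by
  simp [A_coord, cf, pre, par]

lemma alt_zero (f : ℤ → ℂ) (N : ℤ) (hN : ∀ k, N < |k| → f k = 0)
    (h : ∀ k, f (k + 1) + f k = 0) (k : ℤ) : f k = 0 := by
  have h1 : ∀ n : ℕ, f (k + n) = 0 → f k = 0 := by
    intro n
    induction n with
    | zero => simp
    | succ n ih =>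
      intro h'
      apply ih
      have := h (k + n)
      rw [add_assoc] at this
      push_cast at h'
      rw [h'] at this
      simpa using this
  apply h1 (N.natAbs + k.natAbs + 1)
  apply hN
  push_cast
  have h3 := neg_abs_le k
  have h4 := le_abs_self N
  have h5 := abs_nonneg N
  have h6 := le_abs_self (k + (|N| + |k| + 1))
  omega

lemma stepB {D : Lsa →ₗ[ℂ] V} (h : Coc0 D) : ∃ r, IsParityV 0 r ∧ Coc0 (D - AA.flip r) ∧
    GG0 ((D - AA.flip r) (e (.T (-1)))) ∧ GG0 ((D - AA.flip r) (e (.L 1))) := by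
  have eq1 : ∀ {D : Lsa →ₗ[ℂ] V}, Coc0 D → ∀ k : ℤ,
      -(1/2) * D (e (.T (-1))) (.G k, .G (-1 - k)) =
      (-3-k)/2 * D (e (.T 0)) (.G (k+2), .G (-1-k)) + (k-2)/2 * D (e (.T 0)) (.G k, .G (1-k))
      - (D (e (.L (-1))) (.G (k-1), .G (-1-k)) + D (e (.L (-1))) (.G k, .G (-2-k))) := by
    intro D h k
    have := DFunLike.congr_fun (h.cocycle (.L (-1)) (.T 0)) (.G k, .G (-1 - k))
    simp only [bk, Finsupp.sub_apply, Finsupp.smul_apply, A_T_GG, A_L_GG, map_smul, par] at this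
    norm_num at this
    ring_nf at this ⊢
    linear_combination this
  have eq2 : ∀ {D : Lsa →ₗ[ℂ] V}, Coc0 D → ∀ k : ℤ,
      (1/2) * D (e (.T 0)) (.G k, .G (1 - k)) =
      (3-k)/2 * D (e (.T (-1))) (.G (k-2), .G (1-k)) + (k+2)/2 * D (e (.T (-1))) (.G k, .G (-1-k))
      - (D (e (.L 1)) (.G (k+1), .G (1-k)) + D (e (.L 1)) (.G k, .G (2-k))) := by
    intro D h k
    have := DFunLike.congr_fun (h.cocycle (.L 1) (.T (-1))) (.G k, .G (1 - k))
    simp only [bk, Finsupp.sub_apply, Finsupp.smul_apply, A_T_GG, A_L_GG, map_smul, par] at this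
    norm_num at this
    ring_nf at this ⊢
    linear_combination this
  obtain ⟨N1, hN1⟩ := bnd (D (e (.T 0)))
  obtain ⟨N2, hN2⟩ := bnd (D (e (.T (-1))))
  obtain ⟨N3, hN3⟩ := bnd (D (e (.L (-1))))
  obtain ⟨N4, hN4⟩ := bnd (D (e (.L 1)))
  let b : ℤ → ℂ := fun k => (k + 1) * D (e (.T 0)) (.G k, .G (1 - k))
  let c : ℤ → ℂ := fun k => (k - 1) * D (e (.T (-1))) (.G k, .G (-1 - k))
  let φ1 : ℤ → ℂ := fun k => b (k+1) - b (k+2) - 2 * D (e (.L (-1))) (.G k, .G (-2-k))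
  let φ2 : ℤ → ℂ := fun k => c k - c (k-1) - 2 * D (e (.L 1)) (.G (k+1), .G (1-k))
  obtain ⟨r, hr1, hr2⟩ := mkV (fun k => (.G k, .G (-k)))
    (by intro a b hab; simpa using hab)
    (fun k => (3 * φ1 k - φ2 k)/8) (|N1| + |N2| + |N3| + |N4| + 5) (by
      intro k hk
      have hb : ∀ j, |N1| < |j| → b j = 0 := by
        intro j hj
        simp only [b]; rw [hN1 _ _ (by simp only [pos]; exact lt_of_le_of_lt (le_abs_self _) hj), mul_zero]
      have hc : ∀ j, |N2| < |j| → c j = 0 := by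
        intro j hj
        simp only [c]; rw [hN2 _ _ (by simp only [pos]; exact lt_of_le_of_lt (le_abs_self _) hj), mul_zero]
      have k1 := abs_nonneg N1
      have k2 := abs_nonneg N2
      have k3 := abs_nonneg N3
      have k4 := abs_nonneg N4
      have e1 : ∀ j : ℤ, |j| ≤ 5 → |k| - 5 ≤ |k + j| := by
        intro j hj
        have := abs_sub_abs_le_abs_sub k (-j)
        rw [abs_neg, sub_neg_eq_add] at this; omega
      have e2 := e1 1 (by norm_num)
      have e3 := e1 2 (by norm_num)
      have e4 := e1 (-1) (by norm_num)
      simp only [φ1, φ2]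
      rw [hb _ (by omega), hb _ (by omega), hc _ (by omega), hc (k-1) (by rw [sub_eq_add_neg]; omega),
        hN3 _ _ (by simp only [pos]; have := le_abs_self N3; omega),
        hN4 _ _ (by simp only [pos]; have := le_abs_self N4; omega)]
      simp)
  have hp : IsParityV 0 r := by
    rw [isParity_iff]; intro a b hab
    apply hr2
    intro k hk; simp at hk; rw [← hk.1, ← hk.2] at hab; simp [par] at hab
  have hd : DegV 0 r := by
    intro a b hab
    apply hr2
    intro k hk; simp at hk; rw [← hk.1, ← hk.2] at hab; simp [dz] at hab
  have hC := h.sub_inn hp hd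
  have f1 : ∀ k : ℤ, (D - AA.flip r) (e (.T 0)) (.G k, .G (1 - k)) = 0 := by
    intro k
    simp only [LinearMap.sub_apply, LinearMap.flip_apply, AA, ofBasis_e, Finsupp.sub_apply, A_T_GG]
    have h1 := hr1 k
    have h2 := hr1 (k - 1)
    have h3 := eq1 h k
    have h4 := eq2 h k
    simp only [φ1, φ2, b, c] at h1 h2
    rw [show k - 2 * 0 - 1 = k - 1 by ring, show 1 - k - 2 * 0 - 1 = -k by ring, h1,
      show 1 - k = -(k-1) by ring, h2]
    push_cast at *
    ring_nf at *
    linear_combination (3/4) * h3 - (1/4) * h4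
  set D' := D - AA.flip r
  have gg : ∀ i, (∀ k, D' (e i) (.G k, .G (dz i - k)) = 0) → GG0 (D' (e i)) := by
    intro i hi a b
    by_cases hab : a + b = dz i
    · rw [show b = dz i - a by omega]; exact hi a
    · exact hC.deg i _ _ hab
  obtain ⟨N5, hN5⟩ := bnd (D' (e (.T (-1))))
  obtain ⟨N6, hN6⟩ := bnd (D' (e (.L 1)))
  have g1 : GG0 (D' (e (.T 0))) := gg _ f1
  have g2 : GG0 (D' (e (.T (-1)))) := by
    apply gg
    apply alt_zero _ N5
    · intro k hk; exact hN5 _ _ hk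
    · intro k
      have := DFunLike.congr_fun (hC.cocycle (.T 0) (.T (-1))) (.G (k+1), .G (-(k+1)))
      simp only [bk, Finsupp.sub_apply, Finsupp.smul_apply, A_T_GG, par, map_zero, g1 _ _] at this
      norm_num at this
      simp only [dz]
      ring_nf at this ⊢
      linear_combination -this
  refine ⟨r, hp, hC, g2, ?_⟩
  apply gg
  apply alt_zero _ N6
  · intro k hk; exact hN6 _ _ hk
  · intro k
    have := eq2 hC k
    simp only [g1 _ _, g2 _ _, dz] at this ⊢
    ring_nf at this ⊢
    linear_combination this

/-- the even basis element of doubled degree `n` -/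
def E (n : ℤ) : Idx := if n % 2 = 0 then .L (n / 2) else .T ((n - 1)/2)
lemma pre_GG (n m : ℤ) : pre (.G n) (.G m) = E (m - n) := rfl
lemma E_even (k : ℤ) : E (2 * k) = .L k := by simp [E]
lemma E_odd (k : ℤ) : E (2 * k + 1) = .T k := by
  rw [E, if_neg (by omega)]; congr 1; omega
lemma dz_E (n : ℤ) : dz (E n) = n := by
  unfold E; split_ifs <;> simp only [dz] <;> omega
lemma par_E (n : ℤ) : par (E n) = 0 := by
  unfold E; split_ifs <;> rfl
lemma eq_E (a : Idx) (h : par a = 0) : a = E (dz a) := by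
  cases a with
  | L n => simp [dz, E_even]
  | T n => simp [dz, E_odd]
  | G n => simp [par] at h
lemma eq_G (a : Idx) (h : par a ≠ 0) : a = .G (dz a) := by
  cases a <;> simp [par, dz] at h ⊢
lemma E_ne_G (n m : ℤ) : E n ≠ .G m := by
  unfold E; split_ifs <;> simp
lemma E_inj {n m : ℤ} (h : E n = E m) : n = m := by
  rw [← dz_E n, h, dz_E]
lemma pre_GE (n m : ℤ) : ∃ k, pre (.G n) (E m) = .G k := by
  unfold E; split_ifs <;> simp [pre]
/-- coefficient function -/
def mu (n : ℤ) : ℂ := cf (.G 1) (.G (n + 1))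
lemma mu_ne (n : ℤ) (h : n ≠ 2) : mu n ≠ 0 := by
  simp only [mu, cf]
  split_ifs
  · intro h'
    have : ((2 - n : ℤ) : ℂ) = 0 := by push_cast at h' ⊢; linear_combination 4 * h'
    norm_cast at this; omega
  · simp

lemma stepC {D : Lsa →ₗ[ℂ] V} (h : Coc0 D) (g1 : GG0 (D (e (.T (-1))))) (g2 : GG0 (D (e (.L 1)))) :
    ∃ r, IsParityV 0 r ∧ Coc0 (D - AA.flip r) ∧
    GG0 ((D - AA.flip r) (e (.T (-1)))) ∧ (D - AA.flip r) (e (.G 1)) = 0 := by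
  set w := D (e (.G 1)) with hw
  let x : ℤ → ℂ := fun n => w (E n, .G (1 - n))
  let y : ℤ → ℂ := fun n => w (.G (n + 1), E (-n))
  have hA : A (.G 1) w = - D (e (.L 1)) := by
    have := h.cocycle (.G 1) (.G 1)
    rw [← hw] at this
    simp [bk, par] at this
    have h2 : (2 : ℂ) • A (.G 1) w = (2 : ℂ) • (- D (e (.L 1))) := by
      rw [two_smul]; rw [← this]; module
    exact smul_right_injective V (two_ne_zero) h2
  have rel : ∀ n, mu n * x n = mu (-n) * y n := by
    intro n
    have := DFunLike.congr_fun hA (.G (n + 1), .G (1 - n))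
    rw [A_coord, pre_GG, pre_GG] at this
    simp only [Finsupp.neg_apply, g2 _ _, par, mul_one, sgn_one] at this
    rw [show n + 1 - 1 = n by ring, show 1 - n - 1 = - n by ring, show 1 - n = -n + 1 by ring] at this
    simp only [mu, x, y]
    rw [show 1 - n = -n + 1 by ring]
    linear_combination this
  obtain ⟨N, hN⟩ := bnd w
  obtain ⟨r, hr1, hr2⟩ := mkV (fun k => (E k, E (-k)))
    (by intro a b hab; simp only [Prod.mk.injEq] at hab; exact E_inj hab.1)
    (fun k => if k = 2 then x 2 / mu (-2) else y k / mu k) (|N| + 2) (by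
      intro k hk
      have k0 := abs_nonneg N
      rw [if_neg (by rintro rfl; norm_num at hk; omega)]
      have : y k = 0 := by
        apply hN
        simp only [pos]
        have h1 := abs_sub_abs_le_abs_sub k (-1)
        rw [sub_neg_eq_add, abs_neg, abs_one] at h1
        have := le_abs_self N
        omega
      simp [this])
  have hp : IsParityV 0 r := by
    rw [isParity_iff]; intro a b hab
    apply hr2
    intro k hk; simp at hk; rw [← hk.1, ← hk.2] at hab; simp [par_E] at hab
  have hd : DegV 0 r := by
    intro a b hab
    apply hr2
    intro k hk; simp at hk; rw [← hk.1, ← hk.2] at hab; simp [dz_E] at hab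
  have hG1 : ∀ k b, r (.G k, b) = 0 := by
    intro k b; apply hr2; intro n hn; simp [E_ne_G] at hn
  have hG2 : ∀ k b, r (b, .G k) = 0 := by
    intro k b; apply hr2; intro n hn; simp [E_ne_G] at hn
  have hC := h.sub_inn hp hd
  refine ⟨r, hp, hC, ?_, ?_⟩
  · intro a b
    simp only [LinearMap.sub_apply, LinearMap.flip_apply, AA, ofBasis_e, Finsupp.sub_apply, A_T_GG,
      g1 _ _, hG1]
    simp
  · ext ⟨a, b⟩
    by_cases hab : par a + par b = 1
    swap
    · exact (isParity_iff _ _).1 (hC.parity (.G 1)) _ _ hab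
    by_cases hz : dz a + dz b = 1
    swap
    · exact hC.deg (.G 1) _ _ hz
    simp only [LinearMap.sub_apply, LinearMap.flip_apply, AA, ofBasis_e, Finsupp.sub_apply, A_coord,
      ← hw, Finsupp.zero_apply]
    rcases zmod2_cases (par a) with ha | ha
    · have hb : par b ≠ 0 := by intro hb; rw [ha, hb] at hab; simp at hab
      obtain ⟨n, hn⟩ : ∃ n, n = dz a := ⟨_, rfl⟩
      rw [eq_E a ha, eq_G b hb, ← hn, show dz b = -n + 1 by omega, pre_GG]
      obtain ⟨k, hk⟩ := pre_GE 1 n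
      rw [hk, hG1, par_E]
      have := hr1 n
      rw [show -n + 1 - 1 = -n by ring, this]
      have h3 := rel n
      change _ - (_ + _ * mu (-n) * _) = _
      have : w (E n, .G (-n + 1)) = x n := by simp only [x]; congr 3; ring
      rw [this]
      split_ifs with h2
      · have := mu_ne (-n) (by omega)
        subst h2; field_simp; simp
      · have := mu_ne n h2
        field_simp; simp; linear_combination h3
    · obtain ⟨n, hn⟩ : ∃ n, n + 1 = dz a := ⟨dz a - 1, by ring⟩
      have hb : par b = 0 := by
        rcases zmod2_cases (par b) with hb | hb
        · exact hb
        · rw [ha, hb] at hab; simp at hab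
      rw [eq_E b hb, eq_G a (by rw [ha]; simp), ← hn, show dz b = -n by omega, pre_GG]
      obtain ⟨k, hk⟩ := pre_GE 1 (-n)
      rw [hk, hG2]
      have := hr1 n
      rw [show n + 1 - 1 = n by ring, this]
      have h3 := rel n
      change y n - (mu n * _ + _) = _
      split_ifs with h2
      · subst h2
        have h4 : mu 2 = 0 := by norm_num [mu, cf]
        have h5 : mu (-2) ≠ 0 := mu_ne _ (by norm_num)
        rw [h4] at h3
        have : y 2 = 0 := by simpa [h5] using h3
        simp [h4, this]
      · have := mu_ne n h2
        field_simp; simp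


lemma cfG1_odd (n : ℤ) : cf (.G 1) (.G (2*n)) = -1 := by
  rw [cf, if_neg (by omega)]
lemma cfG1_even (n : ℤ) : cf (.G 1) (.G (2*n+1)) = (1 - n)/2 := by
  rw [cf, if_pos (by omega)]; push_cast; ring
lemma cfG0_even (n : ℤ) : cf (.G 0) (.G (2*n)) = -n/2 := by
  rw [cf, if_pos (by omega)]; push_cast; ring
lemma cfG0_odd (n : ℤ) : cf (.G 0) (.G (2*n+1)) = -1 := by
  rw [cf, if_neg (by omega)]

lemma stepD {D : Lsa →ₗ[ℂ] V} (h : Coc0 D) (g1 : GG0 (D (e (.T (-1)))))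
    (g2 : D (e (.G 1)) = 0) : D (e (.T (-1))) = 0 := by
  set t := D (e (.T (-1))) with ht
  have hG0 : D (e (.G 0)) = - A (.G 1) t := by
    have := h.cocycle (.T (-1)) (.G 1)
    rw [g2, ← ht] at this
    simpa [bk, par] using this
  have h00 : A (.G 0) (A (.G 1) t) = 0 := by
    have := h.cocycle (.G 0) (.G 0)
    rw [hG0] at this
    simp [bk, par, h.L0] at this
    have h2 : (2 : ℂ) • A (.G 0) (A (.G 1) t) = (2 : ℂ) • 0 := by
      rw [two_smul, smul_zero]
      rw [← neg_eq_zero, neg_add, ← sub_eq_add_neg]; exact this.symm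
    exact smul_right_injective V (two_ne_zero) h2
  have hL1 : D (e (.L 1)) = 0 := by
    have := h.cocycle (.G 1) (.G 1)
    rw [g2] at this
    simpa [bk, par] using this
  have hT0 : D (e (.T 0)) = (2 : ℂ) • A (.L 1) t := by
    have := h.cocycle (.L 1) (.T (-1))
    rw [hL1, ← ht] at this
    simp [bk, par] at this
    rw [← this, smul_smul]; norm_num
  have hTT : A (.T 0) t = (2 : ℂ) • A (.T (-1)) (A (.L 1) t) := by
    have := h.cocycle (.T 0) (.T (-1))
    rw [hT0, ← ht] at this
    simp [bk, par] at this
    exact (sub_eq_zero.1 this.symm)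
  obtain ⟨p, hp⟩ : ∃ p : ℤ → ℂ, ∀ k, p k = t (.L k, .T (-1-k)) := ⟨_, fun _ => rfl⟩
  obtain ⟨q, hq⟩ : ∃ q : ℤ → ℂ, ∀ k, q k = t (.T k, .L (-1-k)) := ⟨_, fun _ => rfl⟩
  have r1 : ∀ k : ℤ, k ≠ 0 → p k + q (k - 1) = 0 := by
    intro k hk
    have := DFunLike.congr_fun h00 (.G (2*k), .G (2*(-k)))
    rw [A_coord, pre_GG, pre_GG, A_coord, A_coord, cfG0_even, cfG0_even] at this
    rw [show 2 * k - 0 = 2 * k by ring, show 2 * -k - 0 = 2 * -k by ring, E_even, E_even,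
      pre_GG, pre_GG, cfG1_odd, cfG1_odd, show 2 * -k - 1 = 2 * (-1 - k) + 1 by ring,
      show 2 * k - 1 = 2 * (k - 1) + 1 by ring, E_odd, E_odd] at this
    simp only [pre, g1 _ _, par, ← hp] at this
    have h3 := hq (k - 1)
    rw [show -1 - (k - 1) = -k by ring] at h3
    rw [← h3] at this
    have hk' : (k : ℂ) ≠ 0 := by exact_mod_cast hk
    simp at this
    apply mul_left_cancel₀ hk'
    linear_combination 2 * this
  have r2 : ∀ k : ℤ, (k + 2) * q k + (k - 1) * p k = 0 := by
    intro k
    have := DFunLike.congr_fun h00 (.G (2*k+1), .G (2*(-1-k)+1))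
    rw [A_coord, pre_GG, pre_GG, A_coord, A_coord, cfG0_odd, cfG0_odd, sub_zero, sub_zero,
      E_odd, E_odd, pre_GG, pre_GG, cfG1_even, cfG1_even,
      show 2 * (-1 - k) + 1 - 1 = 2 * (-1 - k) by ring,
      show 2 * k + 1 - 1 = 2 * k by ring, E_even, E_even] at this
    simp only [pre, g1 _ _, par, ← hp, ← hq] at this
    simp at this
    linear_combination -2 * this
  have r3 : p 0 + q (-1) = 0 := by
    have := DFunLike.congr_fun h00 (.L 0, .L 0)
    simp only [A_coord, pre, cf, par] at this
    have h3 := hp 0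
    have h4 := hq (-1)
    norm_num at this h3 h4
    rw [← h3, ← h4, g1 _ _, g1 _ _] at this
    linear_combination (-1/2) * this
  have r4 : (1/2)*(p 0 + q 0) + p 0 + (3/2) * p 1 + (1/2) * q (-1) + 2 * q 0 = 0 := by
    have := DFunLike.congr_fun hTT (.T 0, .T (-1))
    have h1 := hp 0
    have h2 := hp 1
    have h3 := hq 0
    have h4 := hq (-1)
    simp only [Finsupp.smul_apply, A_coord, pre, cf, par] at this
    norm_num at this h1 h2 h3 h4
    rw [← h1, ← h2, ← h3, ← h4] at this
    linear_combination this
  have s1 := r1 1 (by norm_num)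
  have s2 := r2 0
  have s3 := r1 (-1) (by norm_num)
  have s4 := r2 (-1)
  norm_num at s1 s2 s3 s4
  have z1 : q 0 = 0 := by linear_combination (1/3) * r4 - (1/6) * r3 - (1/2) * s1 + (1/3) * s2
  have z2 : p 0 = 0 := by linear_combination 2 * z1 - s2
  have z3 : q (-1) = 0 := by linear_combination r3 - z2
  have z4 : p (-1) = 0 := by linear_combination (1/2) * z3 - (1/2) * s4
  have up : ∀ n : ℕ, p n = 0 ∧ q n = 0 := by
    intro n
    induction n with
    | zero => simp [z1, z2]
    | succ n ih =>
      have h1 := r1 (n + 1) (by omega)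
      rw [add_sub_cancel_right, ih.2, add_zero] at h1
      have h2 := r2 (n + 1)
      rw [h1] at h2
      push_cast at *
      refine ⟨h1, ?_⟩
      have h3 : ((n : ℂ) + 1 + 2) ≠ 0 := by
        have : (((n + 3 : ℕ)) : ℂ) ≠ 0 := Nat.cast_ne_zero.2 (by omega)
        push_cast at this; intro h'; apply this; linear_combination h'
      simpa [h3] using h2
  have down : ∀ n : ℕ, p (-1 - n) = 0 ∧ q (-1 - n) = 0 := by
    intro n
    induction n with
    | zero => simp [z3, z4]
    | succ n ih =>
      have h1 := r1 (-1 - n) (by omega)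
      rw [ih.1, zero_add] at h1
      have h2 := r2 (-1 - n - 1)
      rw [h1] at h2
      rw [show (-1 - ((n + 1 : ℕ) : ℤ)) = -1 - n - 1 by push_cast; ring]
      refine ⟨?_, h1⟩
      push_cast at h2
      have h3 : (-1 - (n : ℂ) - 1 - 1) ≠ 0 := by
        have : (((n + 3 : ℕ)) : ℂ) ≠ 0 := Nat.cast_ne_zero.2 (by omega)
        push_cast at this; intro h'; apply this; linear_combination -h'
      simpa [h3] using h2
  have all : ∀ k, p k = 0 ∧ q k = 0 := by
    intro k
    by_cases hk : 0 ≤ k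
    · have := up k.toNat; rwa [Int.toNat_of_nonneg hk] at this
    · have := down (-1 - k).toNat
      rw [Int.toNat_of_nonneg (by omega)] at this
      simpa using this
  ext ⟨a, b⟩
  by_cases hab : par a + par b = 0
  swap
  · exact (isParity_iff _ _).1 (h.parity (.T (-1))) _ _ hab
  by_cases hz : dz a + dz b = dz (.T (-1))
  swap
  · exact h.deg (.T (-1)) _ _ hz
  rcases a with a | a | a <;> rcases b with b | b | b <;> simp [par] at hab <;> simp only [dz] at hz
  · omega
  · rw [show b = -1 - a by omega, ← hp]; simp [all]
  · rw [show b = -1 - a by omega, ← hq]; simp [all]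
  · omega
  · simp [g1 _ _]

lemma stepE {D : Lsa →ₗ[ℂ] V} (h : Coc0 D) (g1 : D (e (.T (-1))) = 0)
    (g2 : D (e (.G 1)) = 0) : D = 0 := by
  have hG0 : D (e (.G 0)) = 0 := by
    have := h.cocycle (.T (-1)) (.G 1)
    rw [g2, g1] at this
    simpa [bk, par] using this
  have hT0 : D (e (.T 0)) = 0 := by
    have := h.cocycle (.G 0) (.G 1)
    rw [g2, hG0] at this
    simpa [bk, par] using this
  have hG : ∀ n : ℤ, D (e (.G n)) = 0 := by
    intro n
    induction n with
    | zero => exact hG0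
    | succ n ih =>
      have := h.cocycle (.T 0) (.G n)
      rw [ih, hT0] at this
      simpa [bk, par] using this
    | pred n ih =>
      have := h.cocycle (.T (-1)) (.G (-n))
      rw [ih, g1] at this
      simp only [bk, map_zero, smul_zero, sub_zero] at this
      rw [← this]; congr 3; ring
  apply hom_ext
  intro i
  cases i with
  | L m =>
    have := h.cocycle (.G 0) (.G (2*m))
    rw [hG, hG] at this
    simpa [bk, par] using this
  | T m =>
    have := h.cocycle (.G 0) (.G (2*m+1))
    rw [hG, hG] at this
    simp only [bk, map_zero, smul_zero, sub_zero] at this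
    rw [if_neg (by omega), show (0 + (2 * m + 1) - 1) / 2 = m by omega, map_smul, smul_eq_zero] at this
    rcases this with h1 | h1
    · exfalso
      have : ((2 * m + 1 : ℤ) : ℂ) = 0 := by push_cast at h1 ⊢; norm_num at h1; linear_combination -h1
      norm_cast at this; omega
    · simpa using h1
  | G m => simpa using hG m

lemma coc_inner {D : Lsa →ₗ[ℂ] V} (h : Coc D) : ∃ r, IsParityV 0 r ∧ D = AA.flip r := by
  obtain ⟨r1, p1, c1⟩ := stepA h
  obtain ⟨r2, p2, c2, g1, g2⟩ := stepB c1
  obtain ⟨r3, p3, c3, g3, g4⟩ := stepC c2 g1 g2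
  have h3 := stepE c3 (stepD c3 g3 g4) g4
  refine ⟨r1 + r2 + r3, ?_, ?_⟩
  · rw [isParity_iff] at *
    intro a b hab
    simp [p1 a b hab, p2 a b hab, p3 a b hab]
  · apply LinearMap.ext; intro x
    have h4 := congrArg (fun f => f x) h3
    simp only [LinearMap.sub_apply, LinearMap.flip_apply, LinearMap.zero_apply] at h4
    change D x = AA x (r1 + r2 + r3)
    rw [map_add, map_add]
    rw [sub_eq_zero, sub_eq_iff_eq_add, sub_eq_iff_eq_add] at h4
    rw [h4]; abel


/-- `tau` as a linear map -/
def TAU : V →ₗ[ℂ] V := ofV fun p => sgn (par p.1 * par p.2) • m2 (e p.2) (e p.1)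
lemma tau_eq (v : V) : tau v = TAU v := by
  simp only [tau, TAU, ofV_apply, m2_e]
  congr 1; ext1 p; ext1 c; rw [smul_smul, mul_comm]
/-- `xi` as a linear map -/
def XI : W →ₗ[ℂ] W := ofW fun p =>
  sgn (par p.1 * (par p.2.1 + par p.2.2)) • m3 (e p.2.1) (e p.2.2) (e p.1)
lemma xi_eq (v : W) : xi v = XI v := by
  simp only [xi, XI, ofW_apply, m3_e]
  congr 1; ext1 p; ext1 c; rw [smul_smul, mul_comm]
/-- left tensor multiplication -/
def ins : Lsa →ₗ[ℂ] V →ₗ[ℂ] W := ofBasis fun a => ofV fun q => m3 (e a) (e q.1) (e q.2)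
lemma ins_m2 (x y z : Lsa) : ins x (m2 y z) = m3 x y z := by
  have h3 : ∀ i j, ins (e i) ∘ₗ m2 (e j) = m3 (e i) (e j) := by
    intro i j
    apply hom_ext; intro k
    rw [LinearMap.comp_apply, m2_e, ins, ofBasis_e, ofV_single, one_smul]
  have h2 : ∀ i, ins (e i) ∘ₗ m2.flip z = (m3 (e i)).flip z := by
    intro i
    apply hom_ext; intro j
    exact congrArg (fun f => f z) (h3 i j)
  have h1 : ins.flip (m2 y z) = (m3.flip y).flip z := by
    apply hom_ext; intro i
    exact congrArg (fun f => f y) (h2 i)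
  exact congrArg (fun f => f x) h1

/-- bilinear version of `oneTensorMap` for inner derivations -/
def OB : V →ₗ[ℂ] V →ₗ[ℂ] W := ofV fun p => (ins (e p.1)) ∘ₗ (AA (e p.2))
lemma OB_eq (D : Lsa → V) (r : V) (hD : ∀ x, D x = AA x r) (v : V) :
    oneTensorMap D v = OB v r := by
  have : OB.flip r = ofV fun p => ins (e p.1) (AA (e p.2) r) := by
    apply homV_ext; intro i j
    rw [LinearMap.flip_apply, OB, m2_e, ofV_single, ofV_single]; simp
  rw [← LinearMap.flip_apply, this, ofV_apply, oneTensorMap]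
  congr 1; ext1 p; ext1 c; rw [hD]
  congr 1
  rw [ins, ofBasis_e, ofV_apply]
  congr 1; ext1 q; ext1 t
  simp
lemma OB_m2 (x y : Lsa) (v : V) : OB (m2 x y) v = ins x (AA y v) := by
  have h2 : ∀ i, OB.flip v ∘ₗ m2 (e i) = ins (e i) ∘ₗ AA.flip v := by
    intro i
    apply hom_ext; intro j
    simp only [LinearMap.comp_apply, LinearMap.flip_apply, OB, m2_e, ofV_single, one_smul]
  have h1 : OB.flip v ∘ₗ m2.flip y = ins.flip (AA y v) := by
    apply hom_ext; intro i
    exact congrArg (fun f => f y) (h2 i)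
  exact congrArg (fun f => f x) h1

/-- bilinear version of `cYB` -/
def CC : V →ₗ[ℂ] V →ₗ[ℂ] W := ofV fun p => ofV fun q =>
  sgn (par q.1 * par p.2) • m3 (bk p.1 q.1) (e p.2) (e q.2) + m3 (e p.1) (bk p.2 q.1) (e q.2)
    + sgn (par q.1 * par p.2) • m3 (e p.1) (e q.1) (bk p.2 q.2)
lemma CC_eq (r : V) : cYB r = CC r r := by
  have : CC.flip r = ofV fun p => (ofV fun q =>
      sgn (par q.1 * par p.2) • m3 (bk p.1 q.1) (e p.2) (e q.2) + m3 (e p.1) (bk p.2 q.1) (e q.2)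
    + sgn (par q.1 * par p.2) • m3 (e p.1) (e q.1) (bk p.2 q.2)) r := by
    apply homV_ext; intro i j
    rw [LinearMap.flip_apply, CC, m2_e, ofV_single, ofV_single]; simp
  rw [← LinearMap.flip_apply, this, ofV_apply, cYB]
  congr 1; ext1 p; ext1 c
  simp only [ofV_apply, sum_m31, sum_m32, sum_m33]
  rw [Finsupp.smul_sum]
  congr 1; ext1 q; ext1 t
  rw [smul_smul]

lemma Hom_coord {ε : ZMod 2} {x : Lsa} (h : Hom ε x) (a : Idx) (ha : x a ≠ 0) : par a = ε := by
  have h1 : (Finsupp.lapply a) ∘ₗ Sg 1 = sgn (par a) • (Finsupp.lapply (R := ℂ) (M := ℂ) a) := by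
    apply hom_ext; intro i
    simp only [LinearMap.comp_apply, Sg_e, map_smul, LinearMap.smul_apply, Finsupp.lapply_apply,
      e_apply, one_mul]
    by_cases h : i = a <;> simp [h]
  have h2 := congrArg (fun f => f x) h1
  simp only [LinearMap.comp_apply, h 1, map_smul, LinearMap.smul_apply, Finsupp.lapply_apply,
    one_mul, smul_eq_mul] at h2
  have h3 := mul_right_cancel₀ ha h2
  rcases zmod2_cases ε with h4 | h4 <;> rcases zmod2_cases (par a) with h5 | h5 <;>
    rw [h4, h5] at h3 ⊢ <;> simp only [sgn_zero, sgn_one] at h3 <;> norm_num at h3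

lemma XI_coord (w : W) (a b c : Idx) :
    XI w (a, b, c) = sgn (par c * (par a + par b)) * w (c, a, b) := by
  have : (Finsupp.lapply (R := ℂ) (M := ℂ) (a, b, c)) ∘ₗ XI =
      sgn (par c * (par a + par b)) • Finsupp.lapply (c, a, b) := by
    apply homW_ext; intro p q r
    simp only [LinearMap.comp_apply, XI, LinearMap.smul_apply,
      Finsupp.lapply_apply, m3_e, ofW_single, one_smul, Finsupp.smul_apply,
      smul_eq_mul, Finsupp.single_apply, Prod.mk.injEq]
    by_cases h1 : q = a <;> by_cases h2 : r = b <;> by_cases h3 : p = c <;> simp [h1, h2, h3]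
  simpa using congrArg (fun f => f w) this

lemma XI_m3 {px py pz : ZMod 2} {x y z : Lsa} (hx : Hom px x) (hy : Hom py y) (hz : Hom pz z) :
    XI (m3 x y z) = sgn (px * (py + pz)) • m3 y z x := by
  ext ⟨a, b, c⟩
  rw [XI_coord, Finsupp.smul_apply, m3_coord, m3_coord, smul_eq_mul]
  by_cases h1 : x c = 0
  · simp [h1]
  by_cases h2 : y a = 0
  · simp [h2]
  by_cases h3 : z b = 0
  · simp [h3]
  rw [Hom_coord hx _ h1, Hom_coord hy _ h2, Hom_coord hz _ h3]; ring

lemma A3_L (N : ℤ) (x y z : Lsa) : A3 (.L N) (m3 x y z) =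
    m3 (B (e (.L N)) x) y z + m3 x (B (e (.L N)) y) z + m3 x y (B (e (.L N)) z) := by
  have h3 : ∀ i j, A3 (.L N) ∘ₗ m3 (e i) (e j) =
      m3 (B (e (.L N)) (e i)) (e j) + m3 (e i) (B (e (.L N)) (e j))
        + m3 (e i) (e j) ∘ₗ B (e (.L N)) := by
    intro i j
    apply hom_ext; intro k
    simp only [LinearMap.comp_apply, LinearMap.add_apply]
    rw [m3_e, A3, ofW_single]; simp [par]
  have h2 : ∀ i, A3 (.L N) ∘ₗ (m3 (e i)).flip z =
      (m3 (B (e (.L N)) (e i))).flip z + (m3 (e i)).flip z ∘ₗ B (e (.L N))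
        + (m3 (e i)).flip (B (e (.L N)) z) := by
    intro i
    apply hom_ext; intro j
    exact congrArg (fun f => f z) (h3 i j)
  have h1 : A3 (.L N) ∘ₗ (m3.flip y).flip z =
      (m3.flip y).flip z ∘ₗ B (e (.L N)) + (m3.flip (B (e (.L N)) y)).flip z
        + (m3.flip y).flip (B (e (.L N)) z) := by
    apply hom_ext; intro i
    exact congrArg (fun f => f y) (h2 i)
  exact congrArg (fun f => f x) h1

/-- `[[L_N, b], c]` -/
def Y (N : ℤ) (b c : Idx) : Lsa := B (bk (.L N) b) (e c)
lemma Hom_B {ε : ZMod 2} {x : Lsa} (i : Idx) (h : Hom ε x) : Hom (par i + ε) (B (e i) x) := by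
  intro δ
  rw [Sg_B, h δ, map_smul, smul_smul, mul_add, sgn_add]
lemma Hom_sub {ε : ZMod 2} {x y : Lsa} (h : Hom ε x) (h' : Hom ε y) : Hom ε (x - y) := by
  intro δ
  rw [map_sub, h δ, h' δ, smul_sub]
lemma Hom_X (N : ℤ) (b : Idx) : Hom (par b) (bk (.L N) b) := by
  have := Hom_bk (.L N) b
  simpa [par] using this
lemma Hom_Y (N : ℤ) (b c : Idx) : Hom (par b + par c) (Y N b c) := by
  rw [Y, jac]
  apply Hom_sub
  · have := Hom_B (.L N) (Hom_B b (Hom_e c))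
    simpa [par] using this
  · apply Hom_smul
    rw [B_e]
    exact Hom_B b (Hom_X N c)
lemma Y_skew (N : ℤ) (b c : Idx) : B (e b) (bk (.L N) c) = - (sgn (par b * par c) • Y N c b) := by
  obtain ⟨k, t, h1, h2⟩ := bk_form (.L N) c
  rw [Y, h1]
  simp only [map_smul, LinearMap.smul_apply, B_e]
  by_cases ht : t = 0
  · simp [ht]
  · have := h2 ht
    rw [bk_skew b k, this]; simp only [par, zero_add]; module
lemma X_bk (N : ℤ) (b c : Idx) :
    B (e (.L N)) (bk b c) = Y N b c - sgn (par b * par c) • Y N c b := by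
  have := jac (.L N) b (e c)
  rw [← Y, B_e, B_e, Y_skew] at this
  rw [this]; simp [par]

lemma A_L_m2 (N : ℤ) (a b : Idx) :
    A (.L N) (m2 (e a) (e b)) = m2 (bk (.L N) a) (e b) + m2 (e a) (bk (.L N) b) := by
  rw [A_m2]; simp [par]
lemma OB1 (x : Lsa) (b c d : Idx) : OB (m2 x (e b)) (m2 (e c) (e d)) =
    m3 x (bk b c) (e d) + sgn (par b * par c) • m3 x (e c) (bk b d) := by
  rw [OB_m2, AA, ofBasis_e, A_m2, map_add, ins_m2, ins_m2]; simp
lemma OB2 (N : ℤ) (x : Lsa) (b c d : Idx) : OB (m2 x (bk (.L N) b)) (m2 (e c) (e d)) =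
    m3 x (Y N b c) (e d) + sgn (par b * par c) • m3 x (e c) (Y N b d) := by
  rw [OB_m2, AA_m2_hom (ε := par b) _ _ _ (by simpa [par] using bk_form (.L N) b),
    map_add, ins_m2, ins_m2]
  simp [Y]
lemma CC_m2 (a b c d : Idx) : CC (m2 (e a) (e b)) (m2 (e c) (e d)) =
  sgn (par c * par b) • m3 (bk a c) (e b) (e d) + m3 (e a) (bk b c) (e d)
    + sgn (par c * par b) • m3 (e a) (e c) (bk b d) := by
  rw [CC, m2_e, m2_e, ofV_single, one_smul, ofV_single]; simp

/-- the defect in the Drinfeld identity -/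
def FF (N : ℤ) : V →ₗ[ℂ] V →ₗ[ℂ] W :=
  LinearMap.mk₂ ℂ (fun u v => OB (A (.L N) u) v + XI (OB (A (.L N) u) v)
    + XI (XI (OB (A (.L N) u) v)) - A3 (.L N) (CC u v))
  (by intro a b c; simp only [map_add, LinearMap.add_apply]; abel)
  (by intro a b c; simp only [map_smul, LinearMap.smul_apply, smul_add, smul_sub])
  (by intro a b c; simp only [map_add, LinearMap.add_apply]; abel)
  (by intro a b c; simp only [map_smul, LinearMap.smul_apply, smul_add, smul_sub])
lemma FF_apply (N : ℤ) (u v : V) : FF N u v = OB (A (.L N) u) v + XI (OB (A (.L N) u) v)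
    + XI (XI (OB (A (.L N) u) v)) - A3 (.L N) (CC u v) := rfl

lemma FF_e (N : ℤ) (a b c d : Idx) (ε δ : ZMod 2) (ha : par a = ε) (hb : par b = ε)
    (hc : par c = δ) (hd : par d = δ) :
    FF N (m2 (e a) (e b)) (m2 (e c) (e d)) =
    (m3 (bk (.L N) a) (bk b c) (e d) + sgn (ε * δ) • m3 (bk (.L N) a) (e c) (bk b d)
      + m3 (e a) (Y N b c) (e d) + sgn (ε * δ) • m3 (e a) (e c) (Y N b d))
    + (sgn ε • m3 (bk b c) (e d) (bk (.L N) a)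
      + (sgn ε * sgn (ε * δ)) • m3 (e c) (bk b d) (bk (.L N) a)
      + sgn ε • m3 (Y N b c) (e d) (e a) + (sgn ε * sgn (ε * δ)) • m3 (e c) (Y N b d) (e a))
    + (sgn δ • m3 (e d) (bk (.L N) a) (bk b c)
      + (sgn δ * sgn ε * sgn (ε * δ)) • m3 (bk b d) (bk (.L N) a) (e c)
      + sgn δ • m3 (e d) (e a) (Y N b c)
      + (sgn δ * sgn ε * sgn (ε * δ)) • m3 (Y N b d) (e a) (e c))
    - (sgn (ε * δ) • m3 (Y N a c - sgn (ε * δ) • Y N c a) (e b) (e d)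
      + sgn (ε * δ) • m3 (bk a c) (bk (.L N) b) (e d)
      + sgn (ε * δ) • m3 (bk a c) (e b) (bk (.L N) d)
      + m3 (bk (.L N) a) (bk b c) (e d)
      + m3 (e a) (Y N b c - sgn (ε * δ) • Y N c b) (e d)
      + m3 (e a) (bk b c) (bk (.L N) d)
      + sgn (ε * δ) • m3 (bk (.L N) a) (e c) (bk b d)
      + sgn (ε * δ) • m3 (e a) (bk (.L N) c) (bk b d)
      + sgn (ε * δ) • m3 (e a) (e c) (Y N b d - sgn (ε * δ) • Y N d b)) := by
  have hXa := Hom_X N a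
  have hbc := Hom_bk b c
  have hbd := Hom_bk b d
  have hYc := Hom_Y N b c
  have hYd := Hom_Y N b d
  have ea := Hom_e a
  have ec := Hom_e c
  have ed := Hom_e d
  rw [FF_apply, A_L_m2, map_add, LinearMap.add_apply, OB1, OB2, CC_m2]
  simp only [map_add, map_smul, A3_L, B_e, X_bk]
  rw [ha, hb] at *
  rw [hc, hd] at *
  rw [XI_m3 hXa hbc ed, XI_m3 hXa ec hbd, XI_m3 ea hYc ed, XI_m3 ea ec hYd]
  simp only [map_smul]
  rw [XI_m3 hbc ed hXa, XI_m3 ec hbd hXa, XI_m3 hYc ed ea, XI_m3 ec hYd ea]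
  rcases zmod2_cases ε with h4 | h4 <;> rcases zmod2_cases δ with h5 | h5 <;> subst h4 <;> subst h5 <;>
    simp <;> abel

/-- skew-symmetrization of the even part -/
def U : V →ₗ[ℂ] V := ofV fun p =>
  if par p.1 = par p.2 then m2 (e p.1) (e p.2) - sgn (par p.1) • m2 (e p.2) (e p.1) else 0

lemma m3_neg1 (x a b : Lsa) : m3 (-x) a b = - m3 x a b := by
  have := congrArg (fun f => f b) (congrArg (fun f => f a) (m3.map_smul (-1 : ℂ) x))
  simpa using this
lemma m3_sub1 (x y a b : Lsa) : m3 (x - y) a b = m3 x a b - m3 y a b := by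
  rw [sub_eq_add_neg, map_add, LinearMap.add_apply, LinearMap.add_apply, m3_neg1, ← sub_eq_add_neg]
lemma m3_neg2 (x a b : Lsa) : m3 a (-x) b = - m3 a x b := by
  have := congrArg (fun f => f b) ((m3 a).map_smul (-1 : ℂ) x)
  simpa using this
lemma m3_sub2 (x y a b : Lsa) : m3 a (x - y) b = m3 a x b - m3 a y b := by
  rw [sub_eq_add_neg, map_add, LinearMap.add_apply, m3_neg2, ← sub_eq_add_neg]
set_option maxHeartbeats 4000000 in
lemma GG_e (N : ℤ) (a b c d : Idx) (ε δ : ZMod 2) (ha : par a = ε) (hb : par b = ε)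
    (hc : par c = δ) (hd : par d = δ) :
    FF N (m2 (e a) (e b) - sgn ε • m2 (e b) (e a)) (m2 (e c) (e d) - sgn δ • m2 (e d) (e c))
    + FF N (m2 (e c) (e d) - sgn δ • m2 (e d) (e c)) (m2 (e a) (e b) - sgn ε • m2 (e b) (e a)) = 0 := by
  simp only [map_sub, map_smul, LinearMap.sub_apply, LinearMap.smul_apply]
  rw [FF_e N a b c d ε δ ha hb hc hd, FF_e N b a c d ε δ hb ha hc hd, FF_e N a b d c ε δ ha hb hd hc,
    FF_e N b a d c ε δ hb ha hd hc, FF_e N c d a b δ ε hc hd ha hb, FF_e N d c a b δ ε hd hc ha hb,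
    FF_e N c d b a δ ε hc hd hb ha, FF_e N d c b a δ ε hd hc hb ha]
  rw [bk_skew c a, bk_skew c b, bk_skew d a, bk_skew d b, ha, hb, hc, hd]
  rcases zmod2_cases ε with h4 | h4 <;> rcases zmod2_cases δ with h5 | h5 <;> subst h4 <;> subst h5 <;>
    simp only [mul_zero, zero_mul, mul_one, one_mul, sgn_zero, sgn_one, map_sub, map_neg, map_smul,
      one_smul, neg_smul, LinearMap.smul_apply, LinearMap.sub_apply, LinearMap.neg_apply, neg_neg, m3_neg1, m3_neg2, m3_sub1, m3_sub2,
      mul_neg, neg_mul, map_add] <;> abel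

lemma GG_U (N : ℤ) (s s' : V) : FF N (U s) (U s') + FF N (U s') (U s) = 0 := by
  have h1 : ∀ i j, (FF N (U (m2 (e i) (e j)))) ∘ₗ U + ((FF N).flip (U (m2 (e i) (e j)))) ∘ₗ U = 0 := by
    intro i j
    apply homV_ext; intro k l
    simp only [LinearMap.add_apply, LinearMap.comp_apply, LinearMap.flip_apply]
    by_cases h1 : par i = par j
    · by_cases h2 : par k = par l
      · have h3 := GG_e N i j k l _ _ rfl h1.symm rfl h2.symm
        have h4 : U (m2 (e i) (e j)) = m2 (e i) (e j) - sgn (par i) • m2 (e j) (e i) := by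
          rw [m2_e, U, ofV_single, one_smul, if_pos h1]; simp
        have h5 : U (m2 (e k) (e l)) = m2 (e k) (e l) - sgn (par k) • m2 (e l) (e k) := by
          rw [m2_e, U, ofV_single, one_smul, if_pos h2]; simp
        rw [h4, h5, h3]; simp
      · have h5 : U (m2 (e k) (e l)) = 0 := by
          rw [m2_e, U, ofV_single, one_smul, if_neg h2]
        rw [h5]; simp
    · have h5 : U (m2 (e i) (e j)) = 0 := by
        rw [m2_e, U, ofV_single, one_smul, if_neg h1]
      rw [h5]; simp
  have h2 : ((FF N).flip (U s')) ∘ₗ U + (FF N (U s')) ∘ₗ U = 0 := by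
    apply homV_ext; intro i j
    exact congrArg (fun f => f s') (h1 i j)
  exact congrArg (fun f => f s) h2

lemma TAU_coord (v : V) (a b : Idx) : TAU v (a, b) = sgn (par a * par b) * v (b, a) := by
  have : (Finsupp.lapply (R := ℂ) (M := ℂ) (a, b)) ∘ₗ TAU =
      sgn (par a * par b) • Finsupp.lapply (b, a) := by
    apply homV_ext; intro p q
    simp only [LinearMap.comp_apply, TAU, LinearMap.smul_apply,
      Finsupp.lapply_apply, m2_e, ofV_single, one_smul, Finsupp.smul_apply,
      smul_eq_mul, Finsupp.single_apply, Prod.mk.injEq]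
    by_cases h1 : q = a <;> by_cases h2 : p = b <;> simp [h1, h2, mul_comm]
  simpa using congrArg (fun f => f v) this
lemma U_coord (v : V) (a b : Idx) : U v (a, b) =
    if par a = par b then v (a, b) - sgn (par a) * v (b, a) else 0 := by
  have : (Finsupp.lapply (R := ℂ) (M := ℂ) (a, b)) ∘ₗ U =
      if par a = par b then Finsupp.lapply (a, b) - sgn (par a) • Finsupp.lapply (b, a) else 0 := by
    apply homV_ext; intro p q
    by_cases h0 : par a = par b
    · by_cases h3 : par p = par q
      · simp only [LinearMap.comp_apply, U, LinearMap.smul_apply, if_pos h0, if_pos h3,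
          LinearMap.sub_apply,
          Finsupp.lapply_apply, m2_e, ofV_single, one_smul, Finsupp.smul_apply, Finsupp.sub_apply,
          smul_eq_mul, Finsupp.single_apply, Prod.mk.injEq]
        by_cases h1 : q = a <;> by_cases h2 : p = b <;> simp [h1, h2]
        · intros; simp_all
      · simp only [LinearMap.comp_apply, U, LinearMap.smul_apply, if_pos h0, if_neg h3,
          LinearMap.sub_apply,
          Finsupp.lapply_apply, m2_e, ofV_single, one_smul, Finsupp.smul_apply, Finsupp.sub_apply,
          smul_eq_mul, Finsupp.single_apply, Prod.mk.injEq]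
        rw [if_neg, if_neg]
        · simp
        · rintro ⟨rfl, rfl⟩; exact h3 h0.symm
        · rintro ⟨rfl, rfl⟩; exact h3 h0
    · simp only [LinearMap.comp_apply, U, if_neg h0, Finsupp.lapply_apply, m2_e, ofV_single, one_smul]
      split_ifs with h3
      · simp only [Finsupp.smul_apply, Finsupp.sub_apply,
          smul_eq_mul, Finsupp.single_apply, Prod.mk.injEq]
        rw [if_neg, if_neg]
        · simp
        · rintro ⟨rfl, rfl⟩; exact h0 h3.symm
        · rintro ⟨rfl, rfl⟩; exact h0 h3
      · rfl
  have h2 := congrArg (fun f => f v) this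
  simp only [LinearMap.comp_apply, Finsupp.lapply_apply] at h2
  rw [h2]; split_ifs <;> simp

lemma U_even (r : V) (hr : IsParityV 0 r) (h : TAU r = - r) : U ((1/2 : ℂ) • r) = r := by
  rw [isParity_iff] at hr
  ext ⟨a, b⟩
  rw [U_coord]
  split_ifs with h1
  · have h2 := DFunLike.congr_fun h (a, b)
    rw [TAU_coord, ← h1] at h2
    have h3 : par a * par a = par a := by rcases zmod2_cases (par a) with h | h <;> rw [h] <;> rfl
    rw [h3, Finsupp.neg_apply] at h2
    simp only [Finsupp.smul_apply, smul_eq_mul]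
    linear_combination (-1/2) * h2
  · rw [hr]
    intro h2; apply h1
    rcases zmod2_cases (par a) with h | h <;> rcases zmod2_cases (par b) with h' | h' <;>
      rw [h, h'] at h2 ⊢ <;> simp at h2

lemma TAU_A (N : ℤ) (v : V) : TAU (A (.L N) v) = A (.L N) (TAU v) := by
  ext ⟨a, b⟩
  have hc : ∀ a, par (pre (.L N) a) = par a := by intro a; cases a <;> rfl
  rw [TAU_coord, A_coord, A_coord, TAU_coord, TAU_coord, hc, hc]
  simp [par]; ring
lemma TAU_TAU (v : V) : TAU (TAU v) = v := by
  ext ⟨a, b⟩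
  rw [TAU_coord, TAU_coord, ← mul_assoc, mul_comm (par b), sgn_mul_self, one_mul]

/-- Every Lie super-bialgebra structure `(𝓛, [·,·], Δ)` on the centerless twisted
N=2 superconformal algebra `𝓛` is triangular coboundary: there is an even
`r ∈ Im(1⊗1 - τ)` with `c(r) = 0` such that `Δ(x) = (-1)^{[r][x]} x ∗ r = x ∗ r`. -/
theorem superBialgebra_is_triangular_coboundary (D : Lsa → V)
    (hD : IsLieSuperBialgebraDelta D) :
    ∃ r : V, r ∈ ImOneSubTau ∧ IsEvenV r ∧ cYB r = 0 ∧ ∀ x : Lsa, D x = act2 x r := by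
  have hc : Coc (hD.linear.mk' D) := by
    refine ⟨hD.parity, fun i j => ?_⟩
    have := hD.cocycle i j
    rw [act2_e, act2_e] at this
    exact this
  obtain ⟨r, hr, hDr⟩ := coc_inner hc
  have hx : ∀ x, D x = AA x r := fun x => congrArg (fun f => f x) hDr
  have hL : ∀ N, D (e (.L N)) = A (.L N) r := by intro N; rw [hx, AA, ofBasis_e]
  have hsk : r + TAU r = 0 := by
    apply inv2; intro N
    rw [map_add, ← TAU_A, ← hL]
    obtain ⟨s, hs⟩ := hD.skewIm (e (.L N))
    simp only [tau_eq] at hs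
    rw [← hs, map_sub, TAU_TAU]; abel
  have hT : TAU r = - r := by rw [eq_neg_iff_add_eq_zero, add_comm]; exact hsk
  refine ⟨r, ⟨(1/2 : ℂ) • r, ?_⟩, hr, ?_, fun x => by rw [act2_AA, hx]⟩
  · simp only [tau_eq, map_smul, hT]; module
  · rw [CC_eq]
    apply inv3; intro N
    have h1 := GG_U N ((1/2 : ℂ) • r) ((1/2 : ℂ) • r)
    rw [U_even r hr hT, ← two_smul ℂ] at h1
    have h2 : FF N r r = 0 := by
      have := smul_eq_zero.1 h1
      rcases this with h | h
      · norm_num at h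
      · exact h
    rw [FF_apply, ← hL] at h2
    have h3 := hD.coJacobi (e (.L N))
    rw [OB_eq D r hx, xi_eq, xi_eq] at h3
    rw [h3, zero_sub, neg_eq_zero] at h2
    exact h2

end
end N2
end

section
/- Let L be the centerless twisted N=2 superconformal algebra. An element r ∈ Im(1⊗1 − τ) ⊂ L ⊗ L satisfies the classical Yang–Baxter equation c(r) = 0 if and only if it satisfies the modified Yang–Baxter equation x ∗ c(r) = 0 for all x ∈ L. -/
namespace N2

noncomputable section

/-- index of `[L_m, e_i]`. -/
def shiftIdx (m : ℤ) : Idx → Idx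
  | .L n => .L (m + n)
  | .T k => .T (k + m)
  | .G n => .G (n + 2*m)

/-- coefficient of `[L_m, e_i]`. -/
def shiftCoef (m : ℤ) : Idx → ℂ
  | .L n => (m : ℂ) - n
  | .T k => -((k : ℂ) + 1/2)
  | .G n => ((m : ℂ) - n) / 2

theorem bk_L (m : ℤ) (i : Idx) :
    bk (.L m) i = Finsupp.single (shiftIdx m i) (shiftCoef m i) := by
  cases i <;> simp [bk, shiftIdx, shiftCoef, e]

theorem shiftIdx_inj (m : ℤ) : Function.Injective (shiftIdx m) := by
  intro i j h
  cases i <;> cases j <;> simp_all [shiftIdx]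

theorem shiftIdx_inj_left (i : Idx) : Function.Injective (fun m => shiftIdx m i) := by
  intro m n h
  cases i <;> simp_all [shiftIdx]

theorem shiftCoef_finite (i : Idx) : {m : ℤ | shiftCoef m i = 0}.Finite := by
  cases i with
  | L n =>
    refine (Set.finite_singleton n).subset fun m hm => ?_
    simpa [shiftCoef, sub_eq_zero] using hm
  | T k =>
    convert Set.finite_empty
    ext m
    simp only [shiftCoef, Set.mem_ofPred_eq, Set.mem_empty_iff_false, iff_false]
    intro h
    have h2 : ((2 * k + 1 : ℤ) : ℂ) = 0 := by push_cast; linear_combination (-2) * h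
    have h3 : 2 * k + 1 = 0 := by exact_mod_cast h2
    omega
  | G n =>
    refine (Set.finite_singleton n).subset fun m hm => ?_
    simpa [shiftCoef, sub_eq_zero] using hm

theorem act3_L (m : ℤ) (w : W) : act3 (e (.L m)) w = w.sum fun p c =>
    c • (Finsupp.single (shiftIdx m p.1, p.2.1, p.2.2) (shiftCoef m p.1)
      + Finsupp.single (p.1, shiftIdx m p.2.1, p.2.2) (shiftCoef m p.2.1)
      + Finsupp.single (p.1, p.2.1, shiftIdx m p.2.2) (shiftCoef m p.2.2)) := by
  unfold act3 e
  rw [Finsupp.sum_single_index (by simp)]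
  simp [bk_L, par, sgn]

/-- `𝓛 ⊗ 𝓛 ⊗ 𝓛` has no nonzero invariants. -/
theorem eq_zero_of_act3 (w : W) (h : ∀ x : Lsa, act3 x w = 0) : w = 0 := by
  by_contra hw
  obtain ⟨⟨a, b, c⟩, hp⟩ := Finsupp.support_nonempty_iff.mpr hw
  have hfin : ({m : ℤ | shiftCoef m a = 0} ∪
      Set.preimage (fun m => shiftIdx m a)
        (Set.image Prod.fst (w.support : Set (Idx × Idx × Idx)))).Finite :=
    (shiftCoef_finite a).union
      (((Finset.finite_toSet _).image _).preimage (shiftIdx_inj_left a).injOn)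
  obtain ⟨m, hm⟩ := hfin.exists_notMem
  simp only [Set.mem_union, not_or, Set.mem_ofPred_eq, Set.mem_preimage] at hm
  obtain ⟨hm1, hm2⟩ := hm
  have hne : ∀ p ∈ w.support, p.1 ≠ shiftIdx m a := fun p hp he => hm2 ⟨p, hp, he⟩
  have key := DFunLike.congr_fun (h (e (.L m))) (shiftIdx m a, b, c)
  rw [act3_L, Finsupp.sum, Finsupp.finsetSum_apply, Finset.sum_eq_single (a, b, c)] at key
  · have := hne _ hp
    simp only [Finsupp.smul_apply, Finsupp.add_apply, Finsupp.single_apply, Prod.mk.injEq,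
      this, Finsupp.coe_zero, Pi.zero_apply, smul_eq_mul] at key
    simp [hm1] at key
    exact (Finsupp.mem_support_iff.mp hp) key
  · rintro ⟨a', b', c'⟩ hq hqne
    have h1 : a' ≠ shiftIdx m a := hne _ hq
    have h2 : ¬ (shiftIdx m a' = shiftIdx m a ∧ b' = b ∧ c' = c) := by
      rintro ⟨h3, rfl, rfl⟩
      exact hqne (by rw [shiftIdx_inj m h3])
    simp only [Finsupp.smul_apply, Finsupp.add_apply, Finsupp.single_apply, Prod.mk.injEq, h1, h2]
    simp
  · intro hq
    exact absurd hp hq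

/-- An element `r ∈ Im(1⊗1 - τ) ⊂ 𝓛 ⊗ 𝓛` satisfies the classical Yang–Baxter
equation `c(r) = 0` iff it satisfies the modified Yang–Baxter equation
`x ∗ c(r) = 0` for all `x ∈ 𝓛`. -/
theorem CYBE_iff_MYBE (r : V) (hr : r ∈ ImOneSubTau) :
    cYB r = 0 ↔ ∀ x : Lsa, act3 x (cYB r) = 0 := by
  constructor
  · intro h x
    rw [h]
    simp [act3]
  · exact eq_zero_of_act3 _

end
end N2
end
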